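/- arXiv:1812.09967 — 3 statements merged into one kernel-verified Lean document; each statement's English description precedes it below -/
import Mathlib

section
/- For all integers k ≥ 2 and ℓ ≥ 1 and every real number α with α² ≠ 1, there exists a positive semidefinite matrix Ψ ∈ ℝ^{S×S}, where S is the vertex set of the (k,ℓ)-spider, such that ⟨Ψ, A^{(0)}⟩ = 1 + α^{2ℓ}/(2k) + (α^{2ℓ} − α²)/((k−1)(α² − 1)), ⟨Ψ, A^{(1)}⟩ = α, ⟨Ψ, A^{(d)}⟩ = 0 for every integer d with 1 < d < 2ℓ, and ⟨Ψ, A^{(2ℓ)}⟩ = ((1 − 1/k)/2)·α^{2ℓ}. -/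
/-!
Any matrix `Ψ` that is a nonnegative combination of matrices `v vᵀ` is positive semidefinite, and
`⟨v vᵀ, A^{(d)}⟩` is the value at `v` of the quadratic form of `A^{(d)}`. Let `u₀` be the indicator
of the root and `uₜ` the indicator of the set of all vertices at depth `t`. The polar form takes
the value `k [|i-j| = d] + k (k-1) [i+j = d]` at `(uᵢ, uⱼ)` for `i, j ≥ 1`, and `k [j = d]` at
`(u₀, uⱼ)`. Adding a multiple of `u₀ u₀ᵀ` only affects `d = 0`, so it is enough to have trace at
most the required value (`exists_of_trace_le`).

For `l = 1` take `½ (u₀ + (α/k) u₁)² + ½ u₀²`, writing `v²` for `v vᵀ`. Let `l = n + 2` and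
`Q = α² + α⁴ + ⋯ + α^(2l-2)`.

* If `|α| ≤ 1 + Q/(k-1)`, take `α^(2l)/(2k²) u_l²` plus a rank-one matrix supported on one edge at
  the root (`spider_large_trace`).
* Otherwise `Q/(k-1) < |α| - 1 ≤ α²`. As `k → ∞` the problem becomes that of writing
  `1 + x + x^(2l)/2` as a sum of squares of polynomials, where `uₜ` stands for `xᵗ` (up to scaling),
  and this is achieved by
  `½ (1 + x)² + (1/2l) ∑_{j ≤ l-2} (l-1-j) (xʲ - x^(j+2))² + 1/(2l) + (1/2)(1 - 1/l) x^(2l)`.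
  For finite `k`, pairs on the same arm in the terms `j ≥ 1` contribute an error at distance `2`
  only. It is absorbed in the coefficient `q` of `u₀ u₂ᵀ + u₂ u₀ᵀ`, and the bound on `Q` keeps `q`
  small enough for positivity (`spider_small_trace`).
-/

/-- The vertex set of the `(k,ℓ)`-spider: the root (`none`) together with `k` paths
(arms) of length `ℓ`; `some (a, t)` is the vertex at distance `t+1` from the root
on arm `a`. -/
abbrev Spider (k l : ℕ) := Option (Fin k × Fin l)

/-- The graph distance in the `(k,ℓ)`-spider tree. -/
def spiderDist {k l : ℕ} : Spider k l → Spider k l → ℕ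
  | none, none => 0
  | none, some (_, t) => (t : ℕ) + 1
  | some (_, t), none => (t : ℕ) + 1
  | some (a, t), some (b, s) =>
      if a = b then Nat.dist (t : ℕ) (s : ℕ) else (t : ℕ) + (s : ℕ) + 2

/-- The distance-`d` adjacency matrix `A^{(d)}` of the `(k,ℓ)`-spider. -/
noncomputable def spiderA (k l d : ℕ) : Matrix (Spider k l) (Spider k l) ℝ :=
  Matrix.of fun i j => if spiderDist i j = d then (1 : ℝ) else 0

/-- The Frobenius inner product `⟨B, C⟩ = Tr(Bᵀ C)`. -/
noncomputable def frob {n : Type*} [Fintype n] (B C : Matrix n n ℝ) : ℝ :=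
  (B.transpose * C).trace

open Finset

/-- The bilinear form of `A^{(d)}`. -/
noncomputable def spiderForm {k l : ℕ} (d : ℕ) (v w : Spider k l → ℝ) : ℝ :=
  ∑ i, ∑ j, v i * w j * (if spiderDist i j = d then (1 : ℝ) else 0)

/-- The indicator of the vertices at distance `t` from the root. -/
def layer {k l : ℕ} (t : ℕ) : Spider k l → ℝ
  | none => if t = 0 then 1 else 0
  | some (_, s) => if (s : ℕ) + 1 = t then 1 else 0

/-- The rank-one matrix `v vᵀ`. -/
noncomputable def sqMat {k l : ℕ} (v : Spider k l → ℝ) : Matrix (Spider k l) (Spider k l) ℝ :=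
  Matrix.vecMulVec v v

lemma sqMat_posSemidef {k l : ℕ} (v : Spider k l → ℝ) : (sqMat v).PosSemidef := by
  have h := Matrix.posSemidef_vecMulVec_self_star v
  simpa [sqMat] using h

lemma frob_sqMat {k l : ℕ} (v : Spider k l → ℝ) (d : ℕ) :
    frob (sqMat v) (spiderA k l d) = spiderForm d v v := by
  unfold frob sqMat spiderForm spiderA
  simp only [Matrix.trace, Matrix.diag, Matrix.mul_apply, Matrix.transpose_apply,
    Matrix.vecMulVec_apply, Matrix.of_apply]
  rw [Finset.sum_comm]

lemma frob_add {n : Type*} [Fintype n] (B B' C : Matrix n n ℝ) :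
    frob (B + B') C = frob B C + frob B' C := by
  simp [frob, Matrix.transpose_add, add_mul, Matrix.trace_add]

lemma frob_smul {n : Type*} [Fintype n] (c : ℝ) (B C : Matrix n n ℝ) :
    frob (c • B) C = c * frob B C := by
  simp [frob, Matrix.transpose_smul, Matrix.trace_smul]

lemma frob_sum {n ι : Type*} [Fintype n] (s : Finset ι) (B : ι → Matrix n n ℝ)
    (C : Matrix n n ℝ) : frob (∑ i ∈ s, B i) C = ∑ i ∈ s, frob (B i) C := by
  simp [frob, Matrix.transpose_sum, Matrix.trace_sum, Finset.sum_mul]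

lemma spiderDist_comm {k l : ℕ} (i j : Spider k l) : spiderDist i j = spiderDist j i := by
  rcases i with _ | ⟨a, t⟩ <;> rcases j with _ | ⟨b, s⟩ <;> simp only [spiderDist]
  rw [Nat.dist_comm]
  by_cases h : a = b
  · simp [h]
  · simp [h, Ne.symm h]; omega

lemma spiderForm_sq {k l : ℕ} (d : ℕ) (x y : ℝ) (v w : Spider k l → ℝ) :
    spiderForm d (x • v + y • w) (x • v + y • w)
      = x ^ 2 * spiderForm d v v + 2 * x * y * spiderForm d v w + y ^ 2 * spiderForm d w w := by
  have hs : spiderForm d v w = spiderForm d w v := by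
    unfold spiderForm
    rw [Finset.sum_comm]
    refine Finset.sum_congr rfl fun i _ => Finset.sum_congr rfl fun j _ => ?_
    rw [spiderDist_comm j i]; ring
  have e : 2 * x * y * spiderForm d v w
      = x * y * spiderForm d v w + x * y * spiderForm d w v := by rw [← hs]; ring
  rw [e]
  unfold spiderForm
  simp only [Finset.mul_sum, ← Finset.sum_add_distrib]
  refine Finset.sum_congr rfl fun i _ => Finset.sum_congr rfl fun j _ => ?_
  simp only [Pi.add_apply, Pi.smul_apply, smul_eq_mul]
  ring

lemma spiderForm_single {k l : ℕ} (d : ℕ) (p q : Spider k l) :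
    spiderForm d (Pi.single p (1 : ℝ)) (Pi.single q (1 : ℝ))
      = if d = spiderDist p q then 1 else 0 := by
  unfold spiderForm
  rw [Finset.sum_eq_single p, Finset.sum_eq_single q]
  · simp only [Pi.single_eq_same, mul_one, one_mul, eq_comm]
  · intro j _ hj
    simp [Pi.single_eq_of_ne hj]
  · simp
  · intro i _ hi
    simp [Pi.single_eq_of_ne hi]
  · simp

lemma layer_zero {k l : ℕ} : (layer 0 : Spider k l → ℝ) = Pi.single none (1 : ℝ) := by
  funext i
  rcases i with _ | ⟨a, s⟩ <;> simp [layer]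

lemma spiderForm_root_root {k l : ℕ} (d : ℕ) :
    spiderForm d (layer 0 : Spider k l → ℝ) (layer 0) = if d = 0 then 1 else 0 := by
  rw [layer_zero, spiderForm_single]
  rfl

lemma spiderForm_root_layer {k l : ℕ} (d t : ℕ) (h1 : 1 ≤ t) (h2 : t ≤ l) :
    spiderForm d (layer 0 : Spider k l → ℝ) (layer t) = if d = t then (k : ℝ) else 0 := by
  obtain ⟨t, rfl⟩ : ∃ m, t = m + 1 := ⟨t - 1, by omega⟩
  have key : ∀ (a : Fin k) (s : Fin l), (1 : ℝ) * layer (t + 1) (some (a, s)) *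
      (if spiderDist (none : Spider k l) (some (a, s)) = d then (1 : ℝ) else 0)
      = if s = ⟨t, by omega⟩ then (if d = t + 1 then 1 else 0) else 0 := by
    intro a s
    have hdist : spiderDist (none : Spider k l) (some (a, s)) = (s : ℕ) + 1 := rfl
    rw [hdist]
    by_cases hs : s = ⟨t, by omega⟩
    · have hs' : (s : ℕ) = t := congrArg Fin.val hs
      rw [if_pos hs]
      simp [layer, hs', eq_comm]
    · have hs' : (s : ℕ) ≠ t := fun h => hs (Fin.ext h)
      simp [layer, hs, hs']
  unfold spiderForm
  rw [layer_zero, Finset.sum_eq_single none]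
  · simp only [Fintype.sum_option, Fintype.sum_prod_type, Pi.single_eq_same, key]
    simp [layer]
  · intro i _ hi
    simp [Pi.single_eq_of_ne hi]
  · simp

lemma spiderForm_layer_layer {k l : ℕ} (d i j : ℕ) (hi : 1 ≤ i) (hi' : i ≤ l)
    (hj : 1 ≤ j) (hj' : j ≤ l) :
    spiderForm d (layer i : Spider k l → ℝ) (layer j)
      = (k : ℝ) * (if Nat.dist i j = d then 1 else 0)
        + (k : ℝ) * ((k : ℝ) - 1) * (if i + j = d then 1 else 0) := by
  obtain ⟨i, rfl⟩ : ∃ m, i = m + 1 := ⟨i - 1, by omega⟩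
  obtain ⟨j, rfl⟩ : ∃ m, j = m + 1 := ⟨j - 1, by omega⟩
  have key : ∀ (a b : Fin k) (s t : Fin l),
      (if (s : ℕ) = i then (1 : ℝ) else 0) * (if (t : ℕ) = j then (1 : ℝ) else 0) *
        (if (if a = b then Nat.dist (s : ℕ) (t : ℕ) else (s : ℕ) + (t : ℕ) + 2) = d
          then (1 : ℝ) else 0)
      = if s = ⟨i, by omega⟩ then (if t = ⟨j, by omega⟩ then
          ((if i + 1 + (j + 1) = d then (1 : ℝ) else 0) +
            if a = b then (if Nat.dist (i + 1) (j + 1) = d then (1 : ℝ) else 0)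
              - (if i + 1 + (j + 1) = d then (1 : ℝ) else 0) else 0) else 0) else 0 := by
    intro a b s t
    have e1 : Nat.dist (i + 1) (j + 1) = Nat.dist i j := Nat.dist_succ_succ
    have e2 : i + 1 + (j + 1) = i + j + 2 := by omega
    rw [e1, e2]
    by_cases hs : s = ⟨i, by omega⟩
    · by_cases ht : t = ⟨j, by omega⟩
      · subst hs ht
        by_cases hab : a = b
        · simp [hab]
        · rw [if_neg hab, if_neg hab]
          simp
      · have ht' : (t : ℕ) ≠ j := fun h => ht (Fin.ext h)
        simp [ht, ht']
    · have hs' : (s : ℕ) ≠ i := fun h => hs (Fin.ext h)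
      simp [hs, hs']
  simp only [spiderForm, layer, Fintype.sum_option, spiderDist, Fintype.sum_prod_type,
    Nat.add_right_cancel_iff, key]
  generalize (if i + 1 + (j + 1) = d then (1 : ℝ) else 0) = X
  generalize (if Nat.dist (i + 1) (j + 1) = d then (1 : ℝ) else 0) = Y
  simp [Finset.sum_add_distrib]
  ring

/-- Surplus trace can be placed on the root without changing the other inner products. -/
lemma exists_of_trace_le {k l : ℕ} (Ψ₀ : Matrix (Spider k l) (Spider k l) ℝ)
    (h₀ : Ψ₀.PosSemidef) (T : ℝ) (hT : frob Ψ₀ (spiderA k l 0) ≤ T) :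
    ∃ Ψ : Matrix (Spider k l) (Spider k l) ℝ, Ψ.PosSemidef ∧ frob Ψ (spiderA k l 0) = T ∧
      ∀ d, 1 ≤ d → frob Ψ (spiderA k l d) = frob Ψ₀ (spiderA k l d) := by
  refine ⟨Ψ₀ + (T - frob Ψ₀ (spiderA k l 0)) • sqMat (layer 0),
    h₀.add ((sqMat_posSemidef _).smul (sub_nonneg.2 hT)), ?_, ?_⟩
  · rw [frob_add, frob_smul, frob_sqMat, spiderForm_root_root]; simp
  · intro d hd
    rw [frob_add, frob_smul, frob_sqMat, spiderForm_root_root, if_neg (by omega)]; simp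

/-- Summation by parts against the second difference of `g`. -/
lemma sum_second_diff (g : ℕ → ℝ) (n : ℕ) :
    ∑ i ∈ range n, ((n : ℝ) - i) * (g (i + 1) - 2 * g (i + 2) + g (i + 3))
      = n * g 1 - (n + 1) * g 2 + g (n + 2) := by
  have tel : ∀ m : ℕ, ∑ i ∈ range m, (g (i + 1) - 2 * g (i + 2) + g (i + 3))
      = g 1 - g 2 - g (m + 1) + g (m + 2) := by
    intro m
    induction m with
    | zero => simp
    | succ m ih => rw [sum_range_succ, ih]; ring_nf
  induction n with
  | zero => simp
  | succ n ih =>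
    have e : ∑ i ∈ range (n + 1),
          (((n + 1 : ℕ) : ℝ) - i) * (g (i + 1) - 2 * g (i + 2) + g (i + 3))
        = ∑ i ∈ range (n + 1), ((n : ℝ) - i) * (g (i + 1) - 2 * g (i + 2) + g (i + 3))
          + ∑ i ∈ range (n + 1), (g (i + 1) - 2 * g (i + 2) + g (i + 3)) := by
      rw [← sum_add_distrib]
      refine sum_congr rfl fun i _ => ?_
      push_cast; ring
    rw [e, sum_range_succ, ih, tel]
    push_cast
    ring_nf

/-- The case of a large trace budget `T`: all of `α` is put on a single edge at the root, which
affects no distance `d ≥ 2`. -/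
lemma spider_large_trace (k n : ℕ) (hk : 2 ≤ k) (α T : ℝ)
    (hT : |α| + α ^ (2 * (n + 2)) / (2 * (k : ℝ)) ≤ T) :
    ∃ Ψ : Matrix (Spider k (n + 2)) (Spider k (n + 2)) ℝ, Ψ.PosSemidef ∧
      frob Ψ (spiderA k (n + 2) 0) ≤ T ∧
      frob Ψ (spiderA k (n + 2) 1) = α ∧
      (∀ d : ℕ, 1 < d → d < 2 * (n + 2) → frob Ψ (spiderA k (n + 2) d) = 0) ∧
      frob Ψ (spiderA k (n + 2) (2 * (n + 2)))
        = ((1 - 1 / (k : ℝ)) / 2) * α ^ (2 * (n + 2)) := by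
  have hk0 : (k : ℝ) ≠ 0 := by positivity
  obtain ⟨σ, hσ, hσ2⟩ : ∃ σ : ℝ, |α| * σ = α ∧ σ ^ 2 = 1 := by
    rcases le_total 0 α with h | h
    · exact ⟨1, by rw [abs_of_nonneg h]; ring, by norm_num⟩
    · exact ⟨-1, by rw [abs_of_nonpos h]; ring, by norm_num⟩
  set p : Spider k (n + 2) := some (⟨0, by omega⟩, ⟨0, by omega⟩) with hp
  have f1 : ∀ d, spiderForm d (layer 0) (Pi.single p (1 : ℝ)) = if d = 1 then 1 else 0 := by
    intro d
    rw [layer_zero, spiderForm_single]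
    rfl
  have f2 : ∀ d, spiderForm d (Pi.single p (1 : ℝ)) (Pi.single p (1 : ℝ))
      = if d = 0 then 1 else 0 := by
    intro d
    rw [spiderForm_single]
    simp [hp, spiderDist, Nat.dist_self]
  set Ψ : Matrix (Spider k (n + 2)) (Spider k (n + 2)) ℝ :=
    (|α| / 2) • sqMat ((1 : ℝ) • layer 0 + σ • Pi.single p (1 : ℝ))
      + (α ^ (2 * (n + 2)) / (2 * (k : ℝ) ^ 2)) • sqMat (layer (n + 2)) with hΨ
  have F : ∀ d, frob Ψ (spiderA k (n + 2) d)
      = |α| * (if d = 0 then 1 else 0) + α * (if d = 1 then 1 else 0)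
        + (α ^ (2 * (n + 2)) / (2 * (k : ℝ) ^ 2)) * ((k : ℝ) * (if d = 0 then 1 else 0)
        + (k : ℝ) * ((k : ℝ) - 1) * (if d = 2 * (n + 2) then 1 else 0)) := by
    intro d
    rw [hΨ, frob_add, frob_smul, frob_smul, frob_sqMat, frob_sqMat, spiderForm_sq,
      spiderForm_root_root, f1, f2, hσ2, spiderForm_layer_layer _ _ _ (by omega) le_rfl
      (by omega) le_rfl, Nat.dist_self, ← two_mul]
    simp only [eq_comm (a := d)]
    linear_combination (if 1 = d then (1 : ℝ) else 0) * hσ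
  have hev : 0 ≤ α ^ (2 * (n + 2)) := (even_two_mul _).pow_nonneg α
  refine ⟨Ψ, ?_, ?_, ?_, ?_, ?_⟩
  · exact ((sqMat_posSemidef _).smul (by positivity)).add
      ((sqMat_posSemidef _).smul (by positivity))
  · rw [F]
    refine le_trans (le_of_eq ?_) hT
    simp
    field_simp
  · rw [F]; simp
    intro h; omega
  · intro d h1 h2
    rw [F, if_neg (by omega), if_neg (by omega), if_neg (by omega)]; simp
  · rw [F, if_neg (by omega), if_neg (by omega), if_pos rfl]
    field_simp
    ring

set_option maxHeartbeats 2000000 in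
/-- The case of small `Q`: the sum of squares above, made exact for finite `k`. The sum over `i`
holds the terms `j = i + 1`; the term `j = 0` becomes the form `½ u₀² + 2 q u₀ u₂ + (n+1) c α⁴ u₂²`,
which is split into two squares. -/
lemma spider_small_trace (k n : ℕ) (hk : 2 ≤ k) (α : ℝ)
    (hα : 1 + (∑ i ∈ range (n + 1), α ^ (2 * (i + 1))) / ((k : ℝ) - 1) < |α|) :
    ∃ Ψ : Matrix (Spider k (n + 2)) (Spider k (n + 2)) ℝ, Ψ.PosSemidef ∧
      frob Ψ (spiderA k (n + 2) 0) ≤ 1 + α ^ (2 * (n + 2)) / (2 * (k : ℝ))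
        + (∑ i ∈ range (n + 1), α ^ (2 * (i + 1))) / ((k : ℝ) - 1) ∧
      frob Ψ (spiderA k (n + 2) 1) = α ∧
      (∀ d : ℕ, 1 < d → d < 2 * (n + 2) → frob Ψ (spiderA k (n + 2) d) = 0) ∧
      frob Ψ (spiderA k (n + 2) (2 * (n + 2)))
        = ((1 - 1 / (k : ℝ)) / 2) * α ^ (2 * (n + 2)) := by
  have hk2 : (2 : ℝ) ≤ k := by exact_mod_cast hk
  have hk0 : (0 : ℝ) < k := by linarith
  have hk1 : (0 : ℝ) < (k : ℝ) - 1 := by linarith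
  have hn0 : (0 : ℝ) ≤ n := Nat.cast_nonneg n
  have hn2 : (0 : ℝ) < (n : ℝ) + 2 := by linarith
  set K : ℝ := (k : ℝ) with hK
  set N : ℝ := (n : ℝ) with hN
  set L : ℝ := α ^ (2 * (n + 2)) with hL
  have hL0 : 0 ≤ L := (even_two_mul _).pow_nonneg α
  set R : ℝ := ∑ i ∈ range n, α ^ (2 * (i + 2)) with hR
  set Z : ℝ := ∑ i ∈ range n, (N - i) * α ^ (2 * (i + 2)) with hZ
  have hQ : ∑ i ∈ range (n + 1), α ^ (2 * (i + 1)) = α ^ 2 + R := by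
    rw [sum_range_succ', add_comm]
  rw [hQ] at hα ⊢
  have hZ0 : 0 ≤ Z := by
    refine sum_nonneg fun i hi => mul_nonneg ?_ ((even_two_mul _).pow_nonneg α)
    have : (i : ℝ) ≤ n := by exact_mod_cast (mem_range.1 hi).le
    linarith
  have hZR : Z ≤ N * R := by
    rw [hZ, hR, mul_sum]
    refine sum_le_sum fun i hi => mul_le_mul_of_nonneg_right ?_ ((even_two_mul _).pow_nonneg α)
    have : (0 : ℝ) ≤ i := Nat.cast_nonneg i
    linarith
  have hR0 : 0 ≤ R := sum_nonneg fun i hi => (even_two_mul _).pow_nonneg α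
  set c : ℝ := 1 / (2 * (N + 2) * K * (K - 1)) with hc
  have hc0 : 0 < c := by positivity
  have hcK : c * (2 * (N + 2) * K * (K - 1)) = 1 := by rw [hc]; field_simp
  -- This `q` makes the inner product with `A^{(2)}` vanish.
  set q : ℝ := c * Z - (K - 1) * α ^ 2 / (4 * K ^ 2) - c * (K - 1) * N * α ^ 2 / 2 with hq
  set β : ℝ := (N + 1) * α ^ 2 / (2 * K * (N + 2)) with hβ
  have hRk : R ≤ (K - 1) * α ^ 2 := by
    have h1 : (α ^ 2 + R) / (K - 1) < α ^ 2 := by nlinarith [sq_abs α, sq_nonneg (|α| - 1)]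
    rw [div_lt_iff₀ hk1] at h1
    nlinarith [sq_nonneg α]
  have hcZ : c * Z ≤ β := by
    have : c * Z ≤ c * (N * ((K - 1) * α ^ 2)) := by gcongr; exact hZR.trans (by gcongr)
    refine this.trans ?_
    have e : c * (N * ((K - 1) * α ^ 2)) = N * α ^ 2 / (2 * K * (N + 2)) := by
      rw [hc]; field_simp
    rw [e, hβ]
    gcongr
    linarith
  have hneg : (K - 1) * α ^ 2 / (4 * K ^ 2) + c * (K - 1) * N * α ^ 2 / 2 ≤ β := by
    have e : β - ((K - 1) * α ^ 2 / (4 * K ^ 2) + c * (K - 1) * N * α ^ 2 / 2)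
        = α ^ 2 / (4 * K ^ 2) := by
      rw [hβ, hc]; field_simp; ring
    have : 0 ≤ α ^ 2 / (4 * K ^ 2) := by positivity
    linarith
  have hqβ : q ^ 2 ≤ β ^ 2 := by
    have h0 : 0 ≤ c * Z := by positivity
    have h1 : 0 ≤ (K - 1) * α ^ 2 / (4 * K ^ 2) := by positivity
    have h2 : 0 ≤ c * (K - 1) * N * α ^ 2 / 2 := by positivity
    apply sq_le_sq'
    · rw [hq]; linarith
    · rw [hq]; linarith
  have hq2 : 2 * q ^ 2 ≤ (N + 1) * c * α ^ 4 := by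
    have e : (N + 1) * c * α ^ 4 - 2 * β ^ 2
        = (N + 1) * α ^ 4 * (K + N + 1) / (2 * K ^ 2 * (K - 1) * (N + 2) ^ 2) := by
      rw [hβ, hc]; field_simp; ring
    have : 0 ≤ (N + 1) * α ^ 4 * (K + N + 1) / (2 * K ^ 2 * (K - 1) * (N + 2) ^ 2) := by
      positivity
    linarith
  have hρ : 0 ≤ L * (1 / (2 * K ^ 2) - c) := by
    apply mul_nonneg hL0
    have e : 1 / (2 * K ^ 2) - c
        = ((N + 1) * (K - 1) - 1) / (2 * K ^ 2 * (K - 1) * (N + 2)) := by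
      rw [hc]; field_simp; ring
    rw [e]
    apply div_nonneg _ (by positivity)
    nlinarith
  set Ψ : Matrix (Spider k (n + 2)) (Spider k (n + 2)) ℝ :=
    (1 / 2 : ℝ) • sqMat ((1 : ℝ) • layer 0 + (α / K) • layer 1)
      + ∑ i ∈ range n, (c * (N - i)) •
          sqMat (α ^ (i + 1) • layer (i + 1) + (-α ^ (i + 3)) • layer (i + 3))
      + (2 : ℝ) • sqMat ((1 / 2 : ℝ) • layer 0 + q • layer 2)
      + ((N + 1) * c * α ^ 4 - 2 * q ^ 2) • sqMat (layer 2)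
      + (L * (1 / (2 * K ^ 2) - c)) • sqMat (layer (n + 2)) with hΨ
  have chain : ∀ d, frob (∑ i ∈ range n, (c * (N - i)) •
        sqMat (α ^ (i + 1) • layer (i + 1) + (-α ^ (i + 3)) • layer (i + 3) :
          Spider k (n + 2) → ℝ)) (spiderA k (n + 2) d)
      = c * K * ((N * α ^ 2 - (N + 1) * α ^ 4 + L + 2 * Z) * (if d = 0 then 1 else 0)
          - 2 * Z * (if d = 2 then 1 else 0))
        + c * (K * (K - 1)) * (N * α ^ 2 * (if d = 2 then 1 else 0)
          - (N + 1) * α ^ 4 * (if d = 4 then 1 else 0)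
          + L * (if d = 2 * (n + 2) then 1 else 0)) := by
    intro d
    have s1 := sum_second_diff (fun m => α ^ (2 * m)) n
    have s2 := sum_second_diff (fun m => α ^ (2 * m) * (if d = 2 * m then 1 else 0)) n
    rw [frob_sum]
    have term : ∀ i ∈ range n, frob ((c * (N - i)) •
        sqMat (α ^ (i + 1) • layer (i + 1) + (-α ^ (i + 3)) • layer (i + 3) :
          Spider k (n + 2) → ℝ)) (spiderA k (n + 2) d)
        = c * K * (if d = 0 then 1 else 0) * ((N - i) *
            (α ^ (2 * (i + 1)) - 2 * α ^ (2 * (i + 2)) + α ^ (2 * (i + 3))))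
          + 2 * c * K * ((if d = 0 then 1 else 0) - (if d = 2 then 1 else 0))
            * ((N - i) * α ^ (2 * (i + 2)))
          + c * (K * (K - 1)) * ((N - i) *
            (α ^ (2 * (i + 1)) * (if d = 2 * (i + 1) then 1 else 0)
              - 2 * (α ^ (2 * (i + 2)) * (if d = 2 * (i + 2) then 1 else 0))
              + α ^ (2 * (i + 3)) * (if d = 2 * (i + 3) then 1 else 0))) := by
      intro i hi
      have hi := mem_range.1 hi
      have e0 : Nat.dist (i + 1) (i + 3) = 2 := by unfold Nat.dist; omega
      have e1 : i + 1 + (i + 3) = 2 * (i + 2) := by ring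
      rw [frob_smul, frob_sqMat, spiderForm_sq,
        spiderForm_layer_layer _ _ _ (by omega) (by omega) (by omega) (by omega),
        spiderForm_layer_layer _ _ _ (by omega) (by omega) (by omega) (by omega),
        spiderForm_layer_layer _ _ _ (by omega) (by omega) (by omega) (by omega),
        Nat.dist_self, Nat.dist_self, e0, e1, ← two_mul, ← two_mul]
      simp only [eq_comm (a := d)]
      ring
    rw [sum_congr rfl term, sum_add_distrib, sum_add_distrib, ← mul_sum, ← mul_sum, ← mul_sum,
      s1, s2]
    simp only [mul_one, show 2 * 2 = 4 from rfl]
    ring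
  have F : ∀ d, frob Ψ (spiderA k (n + 2) d)
      = (1 + α ^ 2 / (2 * K) + K * c * N * α ^ 2 + 2 * K * c * Z + L / (2 * K))
          * (if d = 0 then 1 else 0)
        + α * (if d = 1 then 1 else 0)
        + ((1 - 1 / K) / 2) * L * (if d = 2 * (n + 2) then 1 else 0) := by
    intro d
    rw [hΨ, frob_add, frob_add, frob_add, frob_add, chain, frob_smul, frob_smul, frob_smul,
      frob_smul, frob_sqMat, frob_sqMat, frob_sqMat, frob_sqMat, spiderForm_sq, spiderForm_sq,
      spiderForm_root_root, spiderForm_root_layer _ _ (by omega) (by omega),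
      spiderForm_root_layer _ _ (by omega) (by omega),
      spiderForm_layer_layer _ _ _ (by omega) (by omega) (by omega) (by omega),
      spiderForm_layer_layer _ _ _ (by omega) (by omega) (by omega) (by omega),
      spiderForm_layer_layer _ _ _ (by omega) (by omega) (by omega) (by omega),
      Nat.dist_self, Nat.dist_self, Nat.dist_self, ← two_mul (n + 2)]
    simp only [eq_comm (b := d), show 1 + 1 = 2 from rfl, show 2 + 2 = 4 from rfl]
    have i1 : (if d = 1 then (k : ℝ) else 0) = K * (if d = 1 then 1 else 0) := by simp [hK]
    have i2 : (if d = 2 then (k : ℝ) else 0) = K * (if d = 2 then 1 else 0) := by simp [hK]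
    rw [i1, i2, ← hK, hq]
    generalize (if d = 0 then (1 : ℝ) else 0) = x0
    generalize (if d = 1 then (1 : ℝ) else 0) = x1
    generalize (if d = 2 then (1 : ℝ) else 0) = x2
    generalize (if d = 4 then (1 : ℝ) else 0) = x4
    generalize (if d = 2 * (n + 2) then (1 : ℝ) else 0) = xl
    clear_value c Z L K N
    field_simp
    ring
  refine ⟨Ψ, ?_, ?_, ?_, ?_, ?_⟩
  · refine ((((Matrix.PosSemidef.smul (sqMat_posSemidef _) (by norm_num)).add ?_).add
      ((sqMat_posSemidef _).smul (by norm_num))).add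
      ((sqMat_posSemidef _).smul (sub_nonneg.2 hq2))).add ((sqMat_posSemidef _).smul hρ)
    refine Matrix.posSemidef_sum _ fun i hi => (sqMat_posSemidef _).smul ?_
    have : (i : ℝ) ≤ n := by exact_mod_cast (mem_range.1 hi).le
    exact mul_nonneg hc0.le (by linarith)
  · rw [F, if_pos rfl, if_neg (by omega), if_neg (by omega)]
    have a1 : 2 * K * c * Z ≤ R / (K - 1) := by
      have : 2 * K * c * Z ≤ 2 * K * c * ((N + 2) * R) := by
        gcongr
        nlinarith
      refine this.trans (le_of_eq ?_)
      rw [hc]; field_simp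
    have a2 : α ^ 2 / (2 * K) + K * c * N * α ^ 2 ≤ α ^ 2 / (K - 1) := by
      have e : α ^ 2 / (K - 1) - (α ^ 2 / (2 * K) + K * c * N * α ^ 2)
          = α ^ 2 * (N + 2 + 2 * K) / (2 * K * (K - 1) * (N + 2)) := by
        rw [hc]; field_simp; ring
      have : 0 ≤ α ^ 2 * (N + 2 + 2 * K) / (2 * K * (K - 1) * (N + 2)) := by positivity
      linarith
    rw [add_div]
    linarith
  · rw [F, if_neg (by omega), if_pos rfl, if_neg (by omega)]; ring
  · intro d h1 h2
    rw [F, if_neg (by omega), if_neg (by omega), if_neg (by omega)]; ring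
  · rw [F, if_neg (by omega), if_neg (by omega), if_pos rfl]; ring

theorem spider_technical (k l : ℕ) (hk : 2 ≤ k) (hl : 1 ≤ l) (α : ℝ) (hα : α ^ 2 ≠ 1) :
    ∃ Ψ : Matrix (Spider k l) (Spider k l) ℝ, Ψ.PosSemidef ∧
      frob Ψ (spiderA k l 0)
        = 1 + α ^ (2 * l) / (2 * (k : ℝ))
            + (α ^ (2 * l) - α ^ 2) / (((k : ℝ) - 1) * (α ^ 2 - 1)) ∧
      frob Ψ (spiderA k l 1) = α ∧
      (∀ d : ℕ, 1 < d → d < 2 * l → frob Ψ (spiderA k l d) = 0) ∧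
      frob Ψ (spiderA k l (2 * l)) = ((1 - 1 / (k : ℝ)) / 2) * α ^ (2 * l) := by
  have hk2 : (2 : ℝ) ≤ k := by exact_mod_cast hk
  have hk0 : (k : ℝ) ≠ 0 := by positivity
  have hk1 : (k : ℝ) - 1 ≠ 0 := by linarith
  rcases Nat.lt_or_ge l 2 with h | h
  · obtain rfl : l = 1 := by omega
    set Ψ : Matrix (Spider k 1) (Spider k 1) ℝ :=
      (1 / 2 : ℝ) • sqMat ((1 : ℝ) • layer 0 + (α / k) • layer 1)
        + (1 / 2 : ℝ) • sqMat (layer 0) with hΨ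
    have F : ∀ d, frob Ψ (spiderA k 1 d)
        = (1 + α ^ 2 / (2 * k)) * (if d = 0 then 1 else 0) + α * (if d = 1 then 1 else 0)
          + ((1 - 1 / (k : ℝ)) / 2) * α ^ 2 * (if d = 2 then 1 else 0) := by
      intro d
      rw [hΨ, frob_add, frob_smul, frob_smul, frob_sqMat, frob_sqMat, spiderForm_sq,
        spiderForm_root_root, spiderForm_root_layer _ _ le_rfl le_rfl,
        spiderForm_layer_layer _ _ _ le_rfl le_rfl le_rfl le_rfl, Nat.dist_self]
      have i1 : (if d = 1 then (k : ℝ) else 0) = k * (if d = 1 then 1 else 0) := by simp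
      rw [i1]
      simp only [eq_comm (b := d), show 1 + 1 = 2 from rfl]
      field_simp
      ring
    refine ⟨Ψ, ((sqMat_posSemidef _).smul (by norm_num)).add
      ((sqMat_posSemidef _).smul (by norm_num)), ?_, ?_, ?_, ?_⟩
    · rw [F]; simp
    · rw [F]; simp
    · intro d h1 h2; omega
    · rw [F]; simp
  · obtain ⟨n, rfl⟩ : ∃ n, l = n + 2 := ⟨l - 2, by omega⟩
    have hα' : α ^ 2 - 1 ≠ 0 := sub_ne_zero.2 hα
    have hgeom : (α ^ (2 * (n + 2)) - α ^ 2) / (((k : ℝ) - 1) * (α ^ 2 - 1))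
        = (∑ i ∈ range (n + 1), α ^ (2 * (i + 1))) / ((k : ℝ) - 1) := by
      have e : ∑ i ∈ range (n + 1), α ^ (2 * (i + 1))
          = α ^ 2 * ∑ i ∈ range (n + 1), (α ^ 2) ^ i := by
        rw [mul_sum]
        refine sum_congr rfl fun i _ => ?_
        ring
      rw [e, geom_sum_eq hα]
      field_simp
      ring
    rw [hgeom]
    set Q := (∑ i ∈ range (n + 1), α ^ (2 * (i + 1))) / ((k : ℝ) - 1) with hQ
    have main : ∃ Ψ : Matrix (Spider k (n + 2)) (Spider k (n + 2)) ℝ, Ψ.PosSemidef ∧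
        frob Ψ (spiderA k (n + 2) 0) ≤ 1 + α ^ (2 * (n + 2)) / (2 * (k : ℝ)) + Q ∧
        frob Ψ (spiderA k (n + 2) 1) = α ∧
        (∀ d : ℕ, 1 < d → d < 2 * (n + 2) → frob Ψ (spiderA k (n + 2) d) = 0) ∧
        frob Ψ (spiderA k (n + 2) (2 * (n + 2)))
          = ((1 - 1 / (k : ℝ)) / 2) * α ^ (2 * (n + 2)) := by
      rcases le_or_gt |α| (1 + Q) with hc | hc
      · exact spider_large_trace k n hk α _ (by linarith)
      · exact spider_small_trace k n hk α hc
    obtain ⟨Ψ₀, p0, t0, t1, t2, t3⟩ := main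
    obtain ⟨Ψ, p, s0, s⟩ := exists_of_trace_le Ψ₀ p0 _ t0
    refine ⟨Ψ, p, s0, ?_, ?_, ?_⟩
    · rw [s 1 le_rfl, t1]
    · intro d h1 h2
      rw [s d (by omega), t2 d h1 h2]
    · rw [s _ (by omega), t3]
end

section
/- For every matrix M ∈ ℝ^{V×V}, the symmetric matrix π_*^{−1/2}·‖M‖·Π − (1/2)(ΠM + MᵀΠ) is a 2-local sum of PSD matrices, where ‖M‖ denotes the ℓ²→ℓ² operator norm (spectral norm) of M. (This expresses that the 2-local, degree-2 static sum-of-squares proof system can derive the inequality Σ_{u,v} π(u) M_{uv} X_u X_v ≤ π_*^{−1/2}‖M‖·Σ_u π(u) X_u².) -/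
/-!
Put `N = ‖M‖`, `s = √π_* · N` and `c = N / √π_*`. For every ordered pair `(u, v)`, weighted AM-GM
gives
`π(u) M_{uv} X_u X_v ≤ π(u) M_{uv}² / (2s) · X_u² + π(u) s / 2 · X_v²`,
and the difference of the two sides is the `{u, v}`-local square
`π(u) / (2s) · (M_{uv} X_u - s X_v)²`.
In the sum over all pairs, the coefficient of `X_w²` on the right is at most `c π(w)`: each row of
`M` has squared `ℓ²` norm at most `N²` (`sum_sq_row_le`), so the first terms contribute at most
`π(w) N² / (2s) = c π(w) / 2`, and since `∑ π = 1` the second terms contribute `s / 2`, which is at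
most `c π(w) / 2` because `π_* ≤ π(w)`. The slack is a nonnegative diagonal, hence a sum of
1-local PSD matrices.
-/

section WeightedGraph

variable {V : Type*} [Fintype V] [DecidableEq V] [Nonempty V]

/-- The (weighted) degree `deg(u) = ∑_v A_{uv}` of a weighted graph `A`. -/
noncomputable def gdeg (A : Matrix V V ℝ) (u : V) : ℝ := ∑ v, A u v

/-- The total weight `m = ∑_u deg(u)`. -/
noncomputable def gm (A : Matrix V V ℝ) : ℝ := ∑ u, gdeg A u

/-- The stationary distribution `π(u) = deg(u)/m` of the random walk on `A`. -/
noncomputable def gpi (A : Matrix V V ℝ) (u : V) : ℝ := gdeg A u / gm A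

/-- `π_* = min_u π(u)`. -/
noncomputable def gpiStar (A : Matrix V V ℝ) : ℝ :=
  Finset.univ.inf' Finset.univ_nonempty (gpi A)

/-- The random-walk transition matrix `K = D⁻¹A`, i.e. `K_{uv} = A_{uv}/deg(u)`. -/
noncomputable def gK (A : Matrix V V ℝ) : Matrix V V ℝ :=
  Matrix.of fun u v => A u v / gdeg A u

/-- The `ℓ² → ℓ²` operator norm (spectral norm) of a real square matrix. -/
noncomputable def l2opNorm (M : Matrix V V ℝ) : ℝ :=
  ‖Matrix.toEuclideanCLM (𝕜 := ℝ) M‖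

/-- A symmetric matrix `M` is an `R`-local sum of PSD matrices if it is a finite sum
`M = ∑ i, M_i` of positive semidefinite matrices, each supported on a set `S_i` of at
most `R` rows/columns.  This is exactly derivability of `xᵀMx ≥ 0` in the `R`-local,
degree-2 static sum-of-squares proof system. -/
def IsLocalPSDSum (R : ℕ) (M : Matrix V V ℝ) : Prop :=
  ∃ (n : ℕ) (Ms : Fin n → Matrix V V ℝ) (Ss : Fin n → Finset V),
    M = ∑ i, Ms i ∧ (∀ i, (Ms i).PosSemidef) ∧ (∀ i, (Ss i).card ≤ R) ∧
    (∀ i u v, Ms i u v ≠ 0 → u ∈ Ss i ∧ v ∈ Ss i)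

end WeightedGraph

section LocalCauchySchwarz

variable {V : Type*} [Fintype V] [DecidableEq V]

/-- The bound comes from applying `M` to its own row `u`: the `u`-th coordinate of the image is
the squared norm of that row. -/
lemma sum_sq_row_le (M : Matrix V V ℝ) (u : V) :
    ∑ v, M u v ^ 2 ≤ l2opNorm M ^ 2 := by
  set r : EuclideanSpace ℝ V := WithLp.toLp 2 (M u) with hr
  have hnorm : ‖r‖ ^ 2 = ∑ v, M u v ^ 2 := by
    simp [EuclideanSpace.norm_sq_eq, hr]
  have hcoord : (Matrix.toEuclideanCLM (𝕜 := ℝ) M r) u = ∑ v, M u v ^ 2 := by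
    simp [hr, Matrix.mulVec, dotProduct, pow_two]
  have h1 : ‖(Matrix.toEuclideanCLM (𝕜 := ℝ) M r) u‖ ≤ l2opNorm M * ‖r‖ :=
    (PiLp.norm_apply_le _ u).trans (ContinuousLinearMap.le_opNorm _ r)
  have h2 : ‖r‖ ^ 2 ≤ l2opNorm M * ‖r‖ := by
    rw [hcoord, ← hnorm] at h1
    exact (le_abs_self _).trans h1
  rw [← hnorm]
  have hr0 := norm_nonneg r
  have : ‖r‖ ≤ l2opNorm M := by
    rcases hr0.eq_or_lt with h | h
    · rw [← h]; exact norm_nonneg _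
    · nlinarith
  gcongr

lemma isLocalPSDSum_of_fintype {V ι : Type*} [Fintype ι] {R : ℕ} {M : Matrix V V ℝ}
    (Ms : ι → Matrix V V ℝ) (Ss : ι → Finset V) (hM : M = ∑ i, Ms i)
    (hpsd : ∀ i, (Ms i).PosSemidef) (hcard : ∀ i, (Ss i).card ≤ R)
    (hsupp : ∀ i u v, Ms i u v ≠ 0 → u ∈ Ss i ∧ v ∈ Ss i) : IsLocalPSDSum R M := by
  let e := (Fintype.equivFin ι).symm
  refine ⟨Fintype.card ι, fun i => Ms (e i), fun i => Ss (e i), ?_, fun i => hpsd _,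
    fun i => hcard _, fun i => hsupp _⟩
  rw [hM]
  exact (e.sum_comp Ms).symm

/-- The Gram matrix of the linear form `M_{uv} X_u - s X_v`. -/
def pairSquare {V : Type*} [DecidableEq V] (M : Matrix V V ℝ) (s : ℝ) (i : V × V) : Matrix V V ℝ :=
  Matrix.vecMulVec (Pi.single i.1 (M i.1 i.2) - Pi.single i.2 s)
    (Pi.single i.1 (M i.1 i.2) - Pi.single i.2 s)

lemma pairSquare_apply {V : Type*} [DecidableEq V] (M : Matrix V V ℝ) (s : ℝ) (u v p q : V) :
    pairSquare M s (u, v) p q =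
      (if p = u then (if q = u then M u v ^ 2 else 0) else 0)
      - (if p = u then (if q = v then s * M u v else 0) else 0)
      - (if q = u then (if p = v then s * M u v else 0) else 0)
      + (if p = v then (if q = v then s ^ 2 else 0) else 0) := by
  simp only [pairSquare, Matrix.vecMulVec_apply, Pi.sub_apply, Pi.single_apply]
  split_ifs <;> ring

/-- With weights `w u / (2s)`, the cross terms of the pair squares add up to the symmetrization of
`-diag(w) M`; everything else is diagonal. -/
lemma sum_pairSquare_apply (M : Matrix V V ℝ) (w : V → ℝ) (hw : ∑ u, w u = 1) {s : ℝ}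
    (hs : s ≠ 0) (p q : V) :
    ∑ i : V × V, (w i.1 / (2 * s)) * pairSquare M s i p q =
      (if p = q then w p * (∑ v, M p v ^ 2) / (2 * s) + s / 2 else 0)
        - (w p * M p q + w q * M q p) / 2 := by
  have h1 : ∀ u v, (w u / (2 * s)) * pairSquare M s (u, v) p q =
      (if p = u then (if q = u then w u / (2 * s) * M u v ^ 2 else 0) else 0)
      - (if p = u then (if q = v then w u * M u v / 2 else 0) else 0)
      - (if q = u then (if p = v then w u * M u v / 2 else 0) else 0)
      + (if p = v then (if q = v then w u * (s / 2) else 0) else 0) := by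
    intro u v
    rw [pairSquare_apply]
    split_ifs <;> field_simp <;> ring
  have h2 : ∑ u, ∑ v, (if p = u then (if q = u then w u / (2 * s) * M u v ^ 2 else 0) else 0)
      = if p = q then w p * (∑ v, M p v ^ 2) / (2 * s) else 0 := by
    rw [Finset.sum_comm]
    simp only [Finset.sum_ite_eq, Finset.mem_univ, if_true]
    by_cases h : p = q
    · simp only [h, if_true, ← Finset.mul_sum]; ring
    · simp [h, Ne.symm h]
  have h3 : ∀ p q : V, ∑ u, ∑ v, (if p = u then (if q = v then w u * M u v / 2 else 0) else 0)
      = w p * M p q / 2 := by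
    intro p q
    rw [Finset.sum_comm]
    simp
  have h4 : ∑ u, ∑ v, (if p = v then (if q = v then w u * (s / 2) else 0) else 0)
      = if p = q then s / 2 else 0 := by
    simp only [Finset.sum_ite_eq, Finset.mem_univ, if_true]
    by_cases h : p = q
    · simp only [h, if_true, ← Finset.sum_mul, hw, one_mul]
    · simp [h, Ne.symm h]
  simp only [Fintype.sum_prod_type, h1, Finset.sum_add_distrib, Finset.sum_sub_distrib, h2, h3, h4]
  split_ifs <;> ring

end LocalCauchySchwarz

theorem local_cauchy_schwarz_sos {V : Type*} [Fintype V] [DecidableEq V] [Nonempty V]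
    (A : Matrix V V ℝ) (hA : A.IsSymm) (hA0 : ∀ u v, 0 ≤ A u v)
    (hrow : ∀ u, 0 < ∑ v, A u v)
    (M : Matrix V V ℝ) :
    IsLocalPSDSum 2
      (((Real.sqrt (gpiStar A))⁻¹ * l2opNorm M) • Matrix.diagonal (gpi A)
        - (1 / 2 : ℝ) • (Matrix.diagonal (gpi A) * M + M.transpose * Matrix.diagonal (gpi A))) := by
  have hdeg : ∀ u, 0 < gdeg A u := hrow
  have hm : 0 < gm A := Finset.sum_pos (fun u _ => hdeg u) Finset.univ_nonempty
  have hpi : ∀ u, 0 < gpi A u := fun u => div_pos (hdeg u) hm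
  have hsum : ∑ u, gpi A u = 1 := by
    simp only [gpi, ← Finset.sum_div]
    exact div_self hm.ne'
  have hstar : 0 < gpiStar A := by
    simp [gpiStar, Finset.lt_inf'_iff, hpi]
  have hle : ∀ u, gpiStar A ≤ gpi A u := fun u => Finset.inf'_le _ (Finset.mem_univ u)
  set t := Real.sqrt (gpiStar A) with ht
  have ht0 : 0 < t := Real.sqrt_pos.2 hstar
  have ht2 : t ^ 2 = gpiStar A := Real.sq_sqrt hstar.le
  have hrowM := sum_sq_row_le M
  have hN0 : 0 ≤ l2opNorm M := norm_nonneg _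
  set N := l2opNorm M with hN
  rcases hN0.eq_or_lt with hN' | hNpos
  · -- The square weights divide by `N`; when `N = 0` the matrix `M` vanishes and the sum is empty.
    have hM : M = 0 := by
      ext u v
      have h1 := hrowM u
      have h2 := Finset.single_le_sum (f := fun v => M u v ^ 2) (fun v _ => sq_nonneg _)
        (Finset.mem_univ v)
      rw [← hN'] at h1
      have h3 : M u v ^ 2 = 0 := le_antisymm (by linarith) (sq_nonneg _)
      simpa using h3
    refine ⟨0, fun _ => 0, fun _ => ∅, ?_, fun i => i.elim0, fun i => i.elim0, fun i => i.elim0⟩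
    simp [hM, ← hN']
  · have hs : 0 < t * N := mul_pos ht0 hNpos
    -- The diagonal slack left over after all pair squares are taken out.
    let d : V → ℝ := fun p => t⁻¹ * N * gpi A p
      - (gpi A p * (∑ v, M p v ^ 2) / (2 * (t * N)) + t * N / 2)
    have hd : ∀ p, 0 ≤ d p := by
      intro p
      have h1 : gpi A p * (∑ v, M p v ^ 2) / (2 * (t * N)) ≤ gpi A p * N ^ 2 / (2 * (t * N)) := by
        have := (hpi p).le
        gcongr
        exact hrowM p
      have h2 : gpi A p * N ^ 2 / (2 * (t * N)) = t⁻¹ * N * gpi A p / 2 := by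
        field_simp
      have h3 : t * N ≤ t⁻¹ * N * gpi A p := by
        have h4 : t * N = t⁻¹ * N * t ^ 2 := by field_simp
        rw [h4, ht2]
        gcongr
        exact hle p
      simp only [d]
      linarith
    refine isLocalPSDSum_of_fintype (ι := (V × V) ⊕ V)
      (Sum.elim (fun i => (gpi A i.1 / (2 * (t * N))) • pairSquare M (t * N) i)
        (fun u => Matrix.diagonal (Pi.single u (d u))))
      (Sum.elim (fun i => {i.1, i.2}) (fun u => {u})) ?_ ?_ ?_ ?_
    · ext p q
      have key := sum_pairSquare_apply M (gpi A) hsum hs.ne' p q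
      have hdiag : ∑ u, Matrix.diagonal (Pi.single u (d u)) p q = if p = q then d p else 0 := by
        by_cases h : p = q
        · subst h
          simp [Pi.single_apply]
        · simp [h]
      simp only [Fintype.sum_sum_type, Sum.elim_inl, Sum.elim_inr, Matrix.add_apply,
        Matrix.sum_apply, Matrix.smul_apply, smul_eq_mul, Matrix.sub_apply, key, hdiag]
      simp only [Matrix.diagonal_mul, Matrix.mul_diagonal, Matrix.transpose_apply,
        Matrix.diagonal_apply, d]
      split_ifs <;> ring
    · rintro (i | u)
      · refine Matrix.PosSemidef.smul ?_ (div_nonneg (hpi _).le (by positivity))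
        simpa [pairSquare] using Matrix.posSemidef_vecMulVec_self_star
          (Pi.single i.1 (M i.1 i.2) - Pi.single i.2 (t * N) : V → ℝ)
      · refine Matrix.PosSemidef.diagonal ?_
        exact Pi.single_nonneg.2 (hd u)
    · rintro (i | u)
      · exact Finset.card_le_two
      · simp
    · rintro (⟨a, b⟩ | a) u v h
      · simp only [Sum.elim_inl, Matrix.smul_apply, pairSquare, Matrix.vecMulVec_apply,
          Pi.sub_apply, Pi.single_apply, Finset.mem_insert, Finset.mem_singleton] at h ⊢
        constructor
        · by_contra hu
          rw [not_or] at hu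
          simp [hu.1, hu.2] at h
        · by_contra hv
          rw [not_or] at hv
          simp [hv.1, hv.2] at h
      · simp only [Sum.elim_inr, Matrix.diagonal_apply, Pi.single_apply,
          Finset.mem_singleton] at h ⊢
        split_ifs at h with h1 h2
        · exact ⟨h2, h1 ▸ h2⟩
        · exact absurd rfl h
        · exact absurd rfl h
end

section
/- Let ℓ ≥ 1 and k ≥ 3^ℓ be integers and set R = kℓ + 1. Let ρ ≥ 0 be a real number such that the ℓ²→ℓ² operator norm of K̄^{2ℓ} is at most ρ^{2ℓ} (when K̄ is symmetric, e.g. for regular graphs, one may take ρ to be the spectral radius of K̄). Define β = (k·π_*^{−1/2}/(2·k^{1/(2ℓ)}))·ρ^{2ℓ} + 2/k^{1/(2ℓ)}. Then both of the symmetric matrices β·Π − (1/m)(Ξ∘A) and β·Π + (1/m)(Ξ∘A) are R-local sums of PSD matrices. (Since (1/m)(Ξ∘A) = ΠK̄, this expresses that R-local degree-2 sum of squares can deduce −β⟨X,X⟩_π ≤ ⟨X, K̄X⟩_π ≤ β⟨X,X⟩_π.) -/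
/-! ### Local sums of PSD matrices -/

section Cone

/-- Second moments of an average of `k` independent samples: the cross terms carry the product of
the means, the diagonal terms the second moment of one sample. -/
lemma sum_pi_prod_mul_mean {Ω : Type*} [Fintype Ω] (k : ℕ) (hk : 1 ≤ k) (P g h : Ω → ℝ)
    (hP : ∑ x, P x = 1) :
    ∑ ω : Fin k → Ω, (∏ i, P (ω i)) * (((k : ℝ)⁻¹ * ∑ i, g (ω i)) * ((k : ℝ)⁻¹ * ∑ i, h (ω i)))
      = (1 - (k : ℝ)⁻¹) * ((∑ x, P x * g x) * ∑ x, P x * h x)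
        + (k : ℝ)⁻¹ * ∑ x, P x * (g x * h x) := by
  classical
  have hij : ∀ i j : Fin k, ∑ ω : Fin k → Ω, (∏ m, P (ω m)) * (g (ω i) * h (ω j)) =
      if i = j then ∑ x, P x * (g x * h x) else (∑ x, P x * g x) * ∑ x, P x * h x := by
    intro i j
    have h1 : ∀ ω : Fin k → Ω, (∏ m, P (ω m)) * (g (ω i) * h (ω j)) =
        ∏ m, (P (ω m) * ((if m = i then g (ω m) else 1) * (if m = j then h (ω m) else 1))) := by
      intro ω
      rw [Finset.prod_mul_distrib, Finset.prod_mul_distrib]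
      simp
    simp only [h1]
    rw [← Fintype.prod_sum (fun m x => P x * ((if m = i then g x else 1) *
      (if m = j then h x else 1)))]
    split_ifs with hij
    · subst hij
      rw [Finset.prod_eq_single i]
      · simp
      · intro m _ hm; simp [hm, hP]
      · simp
    · rw [← Finset.mul_prod_erase _ _ (Finset.mem_univ i),
        ← Finset.mul_prod_erase _ _ (Finset.mem_erase.2 ⟨Ne.symm hij, Finset.mem_univ j⟩),
        Finset.prod_eq_one]
      · simp [hij, Ne.symm hij]
      · intro m hm
        simp at hm
        simp [hm, hP]
  have hk' : (k : ℝ) ≠ 0 := by positivity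
  have h2 : ∀ ω : Fin k → Ω,
      (∏ i, P (ω i)) * (((k : ℝ)⁻¹ * ∑ i, g (ω i)) * ((k : ℝ)⁻¹ * ∑ i, h (ω i))) =
      ∑ i, ∑ j, ((k : ℝ)⁻¹ * (k : ℝ)⁻¹) * ((∏ m, P (ω m)) * (g (ω i) * h (ω j))) := by
    intro ω
    simp only [← Finset.mul_sum, ← Finset.sum_mul]
    ring
  simp only [h2]
  rw [Finset.sum_comm]
  have h3 : ∀ i : Fin k, ∑ ω : Fin k → Ω, ∑ j,
      ((k : ℝ)⁻¹ * (k : ℝ)⁻¹) * ((∏ m, P (ω m)) * (g (ω i) * h (ω j))) =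
      ((k : ℝ)⁻¹ * (k : ℝ)⁻¹) * ((∑ x, P x * (g x * h x)) +
        ((k : ℝ) - 1) * ((∑ x, P x * g x) * ∑ x, P x * h x)) := by
    intro i
    rw [Finset.sum_comm]
    simp only [← Finset.mul_sum, hij]
    congr 1
    rw [← Finset.add_sum_erase _ _ (Finset.mem_univ i), if_pos rfl,
      Finset.sum_congr rfl (fun j hj => if_neg (Finset.ne_of_mem_erase hj).symm)]
    simp [Finset.card_erase_of_mem, Nat.cast_sub hk]
  simp only [h3]
  simp
  field_simp
  ring

variable {V : Type*}

lemma IsLocalPSDSum.of_fintype {R : ℕ} {ι : Type*} [Fintype ι] (Ms : ι → Matrix V V ℝ)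
    (Ss : ι → Finset V) (h1 : ∀ i, (Ms i).PosSemidef) (h2 : ∀ i, (Ss i).card ≤ R)
    (h3 : ∀ i u v, Ms i u v ≠ 0 → u ∈ Ss i ∧ v ∈ Ss i) : IsLocalPSDSum R (∑ i, Ms i) := by
  refine ⟨Fintype.card ι, fun i => Ms ((Fintype.equivFin ι).symm i),
    fun i => Ss ((Fintype.equivFin ι).symm i), ?_, fun i => h1 _, fun i => h2 _, fun i => h3 _⟩
  exact (Equiv.sum_comp (Fintype.equivFin ι).symm Ms).symm

lemma IsLocalPSDSum.add {R : ℕ} {M N : Matrix V V ℝ} (hM : IsLocalPSDSum R M)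
    (hN : IsLocalPSDSum R N) : IsLocalPSDSum R (M + N) := by
  obtain ⟨n, Ms, Ss, rfl, h1, h2, h3⟩ := hM
  obtain ⟨n', Ms', Ss', rfl, h1', h2', h3'⟩ := hN
  have := IsLocalPSDSum.of_fintype (R := R) (Sum.elim Ms Ms') (Sum.elim Ss Ss')
    (by rintro (i | i) <;> simp [h1, h1']) (by rintro (i | i) <;> simp [h2, h2'])
    (by rintro (i | i) <;> simpa using by first | exact h3 i | exact h3' i)
  simpa [Fintype.sum_sum_type] using this

lemma IsLocalPSDSum.zero {R : ℕ} : IsLocalPSDSum R (0 : Matrix V V ℝ) :=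
  ⟨0, fun _ => 0, fun _ => ∅, by simp, by simp, by simp, by simp⟩

lemma IsLocalPSDSum.smul {R : ℕ} {M : Matrix V V ℝ} (hM : IsLocalPSDSum R M) {c : ℝ}
    (hc : 0 ≤ c) : IsLocalPSDSum R (c • M) := by
  obtain ⟨n, Ms, Ss, rfl, h1, h2, h3⟩ := hM
  refine ⟨n, fun i => c • Ms i, Ss, by rw [Finset.smul_sum], fun i => (h1 i).smul hc, h2, ?_⟩
  intro i u v h
  exact h3 i u v (fun h0 => h (by simp [h0]))

lemma IsLocalPSDSum.sum {R : ℕ} {ι : Type*} (s : Finset ι) (M : ι → Matrix V V ℝ)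
    (h : ∀ i ∈ s, IsLocalPSDSum R (M i)) : IsLocalPSDSum R (∑ i ∈ s, M i) :=
  Finset.sum_induction M (IsLocalPSDSum R) (fun _ _ => IsLocalPSDSum.add) .zero h

lemma IsLocalPSDSum.rankOne [Finite V] {R : ℕ} (x : V → ℝ) (S : Finset V) (hS : S.card ≤ R)
    (hx : ∀ v, x v ≠ 0 → v ∈ S) : IsLocalPSDSum R (Matrix.vecMulVec x x) := by
  refine ⟨1, fun _ => Matrix.vecMulVec x x, fun _ => S, by simp, fun _ => ?_, fun _ => hS, ?_⟩
  · simpa using Matrix.posSemidef_vecMulVec_self_star x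
  · intro _ u v h
    replace h : x u * x v ≠ 0 := h
    exact ⟨hx _ (left_ne_zero_of_mul h), hx _ (right_ne_zero_of_mul h)⟩

variable [Fintype V]

/-- Diagonally dominant symmetric matrices are `2`-local sums of PSD matrices: the off-diagonal
mass `|M u v|` is paid for by the square `(x_u - sign(M u v) x_v)²`. -/
lemma isLocalPSDSum_diagonal_sub [DecidableEq V] {R : ℕ} (hR : 2 ≤ R) (M : Matrix V V ℝ) (w : V → ℝ)
    (hM : ∀ u v, M u v = M v u) (hw : ∀ u, ∑ v, |M u v| ≤ w u) :
    IsLocalPSDSum R (Matrix.diagonal w - M) := by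
  have key : Matrix.diagonal w - M =
      (∑ u, (w u - ∑ v, |M u v|) • Matrix.vecMulVec (Pi.single u (1 : ℝ)) (Pi.single u 1)) +
      ∑ u, ∑ v, (|M u v| / 2) • Matrix.vecMulVec
        (Pi.single u (1 : ℝ) - (SignType.sign (M u v) : ℝ) • Pi.single v (1 : ℝ))
        (Pi.single u (1 : ℝ) - (SignType.sign (M u v) : ℝ) • Pi.single v (1 : ℝ)) := by
    ext a b
    have hs : ∀ u v, |M u v| / 2 * (((Pi.single u (1 : ℝ) : V → ℝ) a
          - (SignType.sign (M u v) : ℝ) * (Pi.single v (1 : ℝ) : V → ℝ) a) *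
        ((Pi.single u (1 : ℝ) : V → ℝ) b
          - (SignType.sign (M u v) : ℝ) * (Pi.single v (1 : ℝ) : V → ℝ) b))
        = (if a = u then (if b = u then |M u v| / 2 else 0) else 0)
          + (if a = v then (if b = v then |M u v| / 2 else 0) else 0)
          - (if a = u then (if b = v then M u v / 2 else 0) else 0)
          - (if a = v then (if b = u then M u v / 2 else 0) else 0) := by
      intro u v
      have h1 : |M u v| * (SignType.sign (M u v) : ℝ) = M u v := abs_mul_sign (M u v)
      have h2 : (SignType.sign (M u v) : ℝ) * M u v = |M u v| := sign_mul_self (M u v)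
      simp only [Pi.single_apply]
      generalize (SignType.sign (M u v) : ℝ) = σ at *
      have h3 : |M u v| * σ * σ = |M u v| := by rw [h1, mul_comm, h2]
      split_ifs <;> linarith
    simp only [Matrix.sub_apply, Matrix.add_apply, Matrix.sum_apply, Matrix.smul_apply,
      Matrix.vecMulVec_apply, Pi.sub_apply, Pi.smul_apply, smul_eq_mul, hs,
      Finset.sum_add_distrib, Finset.sum_sub_distrib]
    have e1 : ∑ u, ∑ v, (if a = u then (if b = u then |M u v| / 2 else 0) else 0)
        = if a = b then (∑ v, |M a v|) / 2 else 0 := by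
      rw [Finset.sum_eq_single a (by intro u _ h; simp [h.symm]) (by simp)]
      by_cases h : a = b
      · simp [h, Finset.sum_div]
      · simp [h, Ne.symm h]
    have e2 : ∑ u, ∑ v, (if a = v then (if b = v then |M u v| / 2 else 0) else 0)
        = if a = b then (∑ v, |M a v|) / 2 else 0 := by
      rw [Finset.sum_comm, ← e1]
      simp only [hM]
    have e3 : ∑ u, ∑ v, (if a = u then (if b = v then M u v / 2 else 0) else 0) = M a b / 2 := by
      rw [Finset.sum_eq_single a (by intro u _ h; simp [h.symm]) (by simp)]
      simp
    have e4 : ∑ u, ∑ v, (if a = v then (if b = u then M u v / 2 else 0) else 0) = M a b / 2 := by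
      rw [Finset.sum_eq_single b (by intro u _ h; simp [h.symm]) (by simp)]
      simp [hM b a]
    rw [e1, e2, e3, e4]
    by_cases h : a = b
    · subst h
      simp [Pi.single_apply]
      ring
    · simp [Pi.single_apply, h]
      ring
  rw [key]
  refine .add (.sum _ _ fun u _ => .smul (.rankOne _ {u} ?_ ?_) (sub_nonneg.2 (hw u)))
    (.sum _ _ fun u _ => .sum _ _ fun v _ => .smul (.rankOne _ {u, v} ?_ ?_) (by positivity))
  · simp; omega
  · intro v h
    by_contra h'
    simp at h'
    simp [h'] at h
  · exact Finset.card_le_two.trans hR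
  · intro x h
    by_contra h'
    simp at h'
    simp [h'] at h

/-- The spider inequality. Sample a root `u` from `p`, then `k` independent legs `ω i` from `P u`,
and square the average of the vectors `f u (ω i)`: the expected outer product is local as soon as
every spider of positive weight touches at most `R` vertices. -/
lemma isLocalPSDSum_spider {Ω : Type*} [Fintype Ω] {R : ℕ} (k : ℕ) (hk : 1 ≤ k)
    (p : V → ℝ) (hp : ∀ u, 0 ≤ p u) (P : V → Ω → ℝ) (hP0 : ∀ u x, 0 ≤ P u x)
    (hP : ∀ u, ∑ x, P u x = 1) (f : V → Ω → V → ℝ)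
    (hS : ∀ u (ω : Fin k → Ω), (∀ i, P u (ω i) ≠ 0) →
      ∃ S : Finset V, S.card ≤ R ∧ ∀ i v, f u (ω i) v ≠ 0 → v ∈ S) :
    IsLocalPSDSum R (Matrix.of fun v w => ∑ u, p u *
      ((1 - (k : ℝ)⁻¹) * ((∑ x, P u x * f u x v) * ∑ x, P u x * f u x w)
        + (k : ℝ)⁻¹ * ∑ x, P u x * (f u x v * f u x w))) := by
  have key : (Matrix.of fun v w => ∑ u, p u *
      ((1 - (k : ℝ)⁻¹) * ((∑ x, P u x * f u x v) * ∑ x, P u x * f u x w)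
        + (k : ℝ)⁻¹ * ∑ x, P u x * (f u x v * f u x w))) =
      ∑ u, p u • ∑ ω : Fin k → Ω, (∏ i, P u (ω i)) • Matrix.vecMulVec
        (fun v => (k : ℝ)⁻¹ * ∑ i, f u (ω i) v) (fun v => (k : ℝ)⁻¹ * ∑ i, f u (ω i) v) := by
    ext v w
    simp only [Matrix.of_apply, Matrix.sum_apply, Matrix.smul_apply, Matrix.vecMulVec_apply,
      smul_eq_mul]
    refine Finset.sum_congr rfl fun u _ => ?_
    rw [sum_pi_prod_mul_mean k hk (P u) (fun x => f u x v) (fun x => f u x w) (hP u)]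
  rw [key]
  refine .sum _ _ fun u _ => .smul (.sum _ _ fun ω _ => ?_) (hp u)
  by_cases h : ∀ i, P u (ω i) ≠ 0
  · obtain ⟨S, hS1, hS2⟩ := hS u ω h
    refine .smul (.rankOne _ S hS1 fun v hv => ?_) (Finset.prod_nonneg fun i _ => hP0 _ _)
    obtain ⟨i, -, hi⟩ := Finset.exists_ne_zero_of_sum_ne_zero (right_ne_zero_of_mul hv)
    exact hS2 i v hi
  · push Not at h
    obtain ⟨i, hi⟩ := h
    rw [Finset.prod_eq_zero (Finset.mem_univ i) hi, zero_smul]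
    exact .zero

end Cone

/-! ### Reversible signed walks and spiders -/

section Walk

variable {V : Type*} [Fintype V] [DecidableEq V]

/-- A reversible Markov kernel `K` with stationary weights `p`, together with a signed kernel `B`
dominated by `K` and reversible for the same weights. -/
structure IsSignedWalk (p : V → ℝ) (K B : Matrix V V ℝ) : Prop where
  p_nonneg : ∀ u, 0 ≤ p u
  row : ∀ u, ∑ v, K u v = 1
  abs_le : ∀ u v, |B u v| ≤ K u v
  revK : ∀ u v, p u * K u v = p v * K v u
  revB : ∀ u v, p u * B u v = p v * B v u

lemma rev_pow {p : V → ℝ} {B : Matrix V V ℝ} (h : ∀ u v, p u * B u v = p v * B v u) (d : ℕ) :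
    ∀ u v, p u * (B ^ d) u v = p v * (B ^ d) v u := by
  induction d with
  | zero =>
    intro u v
    by_cases huv : u = v
    · rw [huv]
    · simp [huv, Ne.symm huv]
  | succ d ih =>
    intro u v
    rw [pow_succ B d, Matrix.mul_apply, Finset.mul_sum, ← pow_succ, pow_succ', Matrix.mul_apply,
      Finset.mul_sum]
    refine Finset.sum_congr rfl fun w _ => ?_
    calc p u * ((B ^ d) u w * B w v) = (p u * (B ^ d) u w) * B w v := by ring
      _ = (B ^ d) w u * (p w * B w v) := by rw [ih]; ring
      _ = p v * (B v w * (B ^ d) w u) := by rw [h]; ring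

namespace IsSignedWalk

variable {p : V → ℝ} {K B : Matrix V V ℝ}

lemma row_pow (H : IsSignedWalk p K B) (d : ℕ) : ∀ u, ∑ v, (K ^ d) u v = 1 := by
  induction d with
  | zero => simp [Matrix.one_apply]
  | succ d ih =>
    intro u
    simp only [pow_succ, Matrix.mul_apply]
    rw [Finset.sum_comm]
    simp [← Finset.mul_sum, H.row, ih]

lemma abs_pow_le (H : IsSignedWalk p K B) (d : ℕ) : ∀ u v, |(B ^ d) u v| ≤ (K ^ d) u v := by
  induction d with
  | zero => intro u v; by_cases h : u = v <;> simp [h]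
  | succ d ih =>
    intro u v
    simp only [pow_succ, Matrix.mul_apply]
    refine (Finset.abs_sum_le_sum_abs _ _).trans (Finset.sum_le_sum fun w _ => ?_)
    rw [abs_mul]
    exact mul_le_mul (ih _ _) (H.abs_le _ _) (abs_nonneg _) ((abs_nonneg _).trans (ih _ _))

lemma stat_pow (H : IsSignedWalk p K B) (d : ℕ) (v : V) : ∑ u, p u * (K ^ d) u v = p v := by
  simp only [rev_pow H.revK d _ v, ← Finset.mul_sum, H.row_pow, mul_one]

end IsSignedWalk

/-- The matrix `Π B ^ d` of the quadratic form `⟨x, B ^ d x⟩_π`. -/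
noncomputable def walkForm (p : V → ℝ) (B : Matrix V V ℝ) (d : ℕ) : Matrix V V ℝ :=
  Matrix.of fun u v => p u * (B ^ d) u v

lemma walkForm_zero (p : V → ℝ) (B : Matrix V V ℝ) : walkForm p B 0 = Matrix.diagonal p := by
  ext u v
  by_cases h : u = v <;> simp [walkForm, Matrix.one_apply, h]

/-- Two walks from a common stationary root concatenate into one walk. -/
lemma sum_mul_pow_mul_pow {p : V → ℝ} {B : Matrix V V ℝ}
    (h : ∀ u v, p u * B u v = p v * B v u) (i j : ℕ) (x y : V) :
    ∑ u, p u * ((B ^ i) u x * (B ^ j) u y) = walkForm p B (i + j) x y := by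
  rw [walkForm, Matrix.of_apply, pow_add, Matrix.mul_apply, Finset.mul_sum]
  refine Finset.sum_congr rfl fun u _ => ?_
  rw [← mul_assoc, rev_pow h i u x, mul_assoc]

/-- Probability of reaching `x.1` with sign `x.2` after `d` signed steps from `u`; `true` encodes
`+1` and `false` encodes `-1`. -/
noncomputable def legW (K B : Matrix V V ℝ) (d : ℕ) (u : V) (x : V × Bool) : ℝ :=
  ((K ^ d) u x.1 + (if x.2 then 1 else -1) * (B ^ d) u x.1) / 2

lemma legW_nonneg {p : V → ℝ} {K B : Matrix V V ℝ} (H : IsSignedWalk p K B) (d : ℕ) (u : V)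
    (x : V × Bool) : 0 ≤ legW K B d u x := by
  have := abs_le.1 (H.abs_pow_le d u x.1)
  unfold legW
  split_ifs <;> linarith

/-- The spider whose `k` legs are observed at distances `j` and `j + d` from the root, with
coefficients `a` and `b`. A leg is a vertex with a sign reached after `j` steps, followed by a
vertex with a relative sign reached after `d` more. For `j = 0` the first vertex is the root. -/
lemma isLocalPSDSum_pair {p : V → ℝ} {K B : Matrix V V ℝ} (H : IsSignedWalk p K B) {R k : ℕ}
    (hk : 1 ≤ k) (j d : ℕ) (a b : ℝ) (hR : 2 * k ≤ R ∨ (j = 0 ∧ k + 1 ≤ R)) :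
    IsLocalPSDSum R
      ((1 - (k : ℝ)⁻¹) • (a ^ 2 • walkForm p B (2 * j) + b ^ 2 • walkForm p B (2 * j + 2 * d)
          + (2 * a * b) • walkForm p B (2 * j + d))
        + (k : ℝ)⁻¹ • ((a ^ 2 + b ^ 2) • walkForm p B 0 + (2 * a * b) • walkForm p B d)) := by
  let sg : Bool → ℝ := fun s => if s then 1 else -1
  let P : V → (V × Bool) × (V × Bool) → ℝ := fun u x =>
    legW K B j u x.1 * legW K B d x.1.1 x.2
  let δ : V → V → ℝ := fun v x => if v = x then 1 else 0
  let f : V → (V × Bool) × (V × Bool) → V → ℝ := fun _ x v =>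
    a * sg x.1.2 * δ x.1.1 v + b * (sg x.1.2 * sg x.2.2) * δ x.2.1 v
  have hPsum : ∀ u, ∑ x, P u x = 1 := by
    intro u
    have : ∀ v w, (K ^ j) u v * (K ^ d) v w = P u ((v, true), (w, true)) +
      P u ((v, true), (w, false)) + (P u ((v, false), (w, true)) +
      P u ((v, false), (w, false))) := by
      intro v w; simp [P, legW]; ring
    calc ∑ x, P u x = ∑ v, ∑ w, (K ^ j) u v * (K ^ d) v w := by
          simp only [Fintype.sum_prod_type, Fintype.sum_bool, this, Finset.sum_add_distrib]
          ring
      _ = 1 := by simp [← Finset.mul_sum, H.row_pow]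
  have hmean : ∀ u v, ∑ x, P u x * f u x v = a * (B ^ j) u v + b * (B ^ (j + d)) u v := by
    intro u v
    have : ∀ y z, a * ((B ^ j) u y * (K ^ d) y z * δ y v) + b * ((B ^ j) u y * (B ^ d) y z * δ z v)
      = P u ((y, true), (z, true)) * f u ((y, true), (z, true)) v +
      P u ((y, true), (z, false)) * f u ((y, true), (z, false)) v +
      (P u ((y, false), (z, true)) * f u ((y, false), (z, true)) v +
      P u ((y, false), (z, false)) * f u ((y, false), (z, false)) v) := by
      intro y z; simp [P, f, sg, legW]; ring
    calc ∑ x, P u x * f u x v = ∑ y, ∑ z, (a * ((B ^ j) u y * (K ^ d) y z * δ y v)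
            + b * ((B ^ j) u y * (B ^ d) y z * δ z v)) := by
          simp only [Fintype.sum_prod_type, Fintype.sum_bool, this, Finset.sum_add_distrib]
          ring
      _ = _ := by
        have h1 : ∀ y, ∑ z, (B ^ j) u y * (K ^ d) y z * δ y v = (B ^ j) u y * δ y v := by
          intro y
          rw [← Finset.sum_mul, ← Finset.mul_sum, H.row_pow, mul_one]
        simp only [Finset.sum_add_distrib, ← Finset.mul_sum, h1]
        simp [δ, pow_add, Matrix.mul_apply]
  have hsq : ∀ u v w, ∑ x, P u x * (f u x v * f u x w) =
      a ^ 2 * ((K ^ j) u v * δ v w) + b ^ 2 * ((K ^ (j + d)) u v * δ v w)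
        + a * b * ((K ^ j) u v * (B ^ d) v w + (K ^ j) u w * (B ^ d) w v) := by
    intro u v w
    have : ∀ y z, a ^ 2 * ((K ^ j) u y * (K ^ d) y z * (δ y v * δ y w))
        + b ^ 2 * ((K ^ j) u y * (K ^ d) y z * (δ z v * δ z w))
        + a * b * ((K ^ j) u y * (B ^ d) y z * (δ y v * δ z w)
          + (K ^ j) u y * (B ^ d) y z * (δ y w * δ z v))
      = P u ((y, true), (z, true)) * (f u ((y, true), (z, true)) v * f u ((y, true), (z, true)) w) +
      P u ((y, true), (z, false)) * (f u ((y, true), (z, false)) v * f u ((y, true), (z, false)) w) +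
      (P u ((y, false), (z, true)) * (f u ((y, false), (z, true)) v * f u ((y, false), (z, true)) w)
      + P u ((y, false), (z, false)) *
        (f u ((y, false), (z, false)) v * f u ((y, false), (z, false)) w)) := by
      intro y z; simp [P, f, sg, legW]; ring
    calc ∑ x, P u x * (f u x v * f u x w) =
          ∑ y, ∑ z, (a ^ 2 * ((K ^ j) u y * (K ^ d) y z * (δ y v * δ y w))
            + b ^ 2 * ((K ^ j) u y * (K ^ d) y z * (δ z v * δ z w))
            + a * b * ((K ^ j) u y * (B ^ d) y z * (δ y v * δ z w)
              + (K ^ j) u y * (B ^ d) y z * (δ y w * δ z v))) := by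
          simp only [Fintype.sum_prod_type, Fintype.sum_bool, this, Finset.sum_add_distrib]
          ring
      _ = _ := by
        have h1 : ∀ y, ∑ z, (K ^ j) u y * (K ^ d) y z * (δ y v * δ y w)
            = (K ^ j) u y * (δ y v * δ y w) := by
          intro y
          rw [← Finset.sum_mul, ← Finset.mul_sum, H.row_pow, mul_one]
        simp only [Finset.sum_add_distrib, ← Finset.mul_sum, h1]
        by_cases hvw : v = w
        · subst hvw
          simp [δ, pow_add, Matrix.mul_apply]
        · simp [δ, pow_add, Matrix.mul_apply, hvw, Ne.symm hvw]
  have key := isLocalPSDSum_spider (R := R) k hk p H.p_nonneg P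
    (fun u x => mul_nonneg (legW_nonneg H _ _ _) (legW_nonneg H _ _ _)) hPsum f ?_
  · convert key using 1
    ext v w
    simp only [Matrix.of_apply, hmean, hsq, Matrix.add_apply, Matrix.smul_apply, smul_eq_mul]
    have expand : ∀ u, p u * ((1 - (k : ℝ)⁻¹) * ((a * (B ^ j) u v + b * (B ^ (j + d)) u v) *
          (a * (B ^ j) u w + b * (B ^ (j + d)) u w)) + (k : ℝ)⁻¹ *
          (a ^ 2 * ((K ^ j) u v * δ v w) + b ^ 2 * ((K ^ (j + d)) u v * δ v w)
            + a * b * ((K ^ j) u v * (B ^ d) v w + (K ^ j) u w * (B ^ d) w v)))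
        = (1 - (k : ℝ)⁻¹) * (a ^ 2 * (p u * ((B ^ j) u v * (B ^ j) u w))
            + b ^ 2 * (p u * ((B ^ (j + d)) u v * (B ^ (j + d)) u w))
            + a * b * (p u * ((B ^ j) u v * (B ^ (j + d)) u w))
            + a * b * (p u * ((B ^ (j + d)) u v * (B ^ j) u w)))
          + (k : ℝ)⁻¹ * (a ^ 2 * δ v w * (p u * (K ^ j) u v)
            + b ^ 2 * δ v w * (p u * (K ^ (j + d)) u v)
            + a * b * (B ^ d) v w * (p u * (K ^ j) u v)
            + a * b * (B ^ d) w v * (p u * (K ^ j) u w)) := by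
      intro u; ring
    simp only [expand, Finset.sum_add_distrib, ← Finset.mul_sum, H.stat_pow,
      sum_mul_pow_mul_pow H.revB]
    have e0 : walkForm p B 0 v w = p v * δ v w := by simp [walkForm, Matrix.one_apply, δ]
    have e1 : p w * (B ^ d) w v = walkForm p B d v w := by
      rw [← rev_pow H.revB]; rfl
    have e2 : p v * (B ^ d) v w = walkForm p B d v w := rfl
    rw [e0, show j + j = 2 * j by ring, show j + d + (j + d) = 2 * j + 2 * d by ring,
      show j + (j + d) = 2 * j + d by ring, show j + d + j = 2 * j + d by ring]
    linear_combination (k : ℝ)⁻¹ * (-a * b) * (e1 + e2)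
  · intro u ω hω
    have hf : ∀ x v, f u x v ≠ 0 → v = x.1.1 ∨ v = x.2.1 := by
      intro x v h
      by_contra! h'
      exact h (by simp [f, δ, h'.1.symm, h'.2.symm])
    rcases hR with hR | ⟨rfl, hR⟩
    · refine ⟨Finset.univ.image (fun i => (ω i).1.1) ∪ Finset.univ.image (fun i => (ω i).2.1),
        ?_, ?_⟩
      · refine (Finset.card_union_le _ _).trans ?_
        have h1 := Finset.card_image_le (s := Finset.univ) (f := fun i => (ω i).1.1)
        have h2 := Finset.card_image_le (s := Finset.univ) (f := fun i => (ω i).2.1)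
        simp only [Finset.card_univ, Fintype.card_fin] at h1 h2
        omega
      · intro i v h
        rcases hf _ _ h with h | h <;> simp [h]
    -- a walk of length `0` stays at `u`, so all legs share that vertex
    · have hroot : ∀ i, (ω i).1.1 = u := by
        intro i
        by_contra h
        refine hω i (mul_eq_zero_of_left ?_ _)
        simp [legW, Ne.symm h]
      refine ⟨insert u (Finset.univ.image (fun i => (ω i).2.1)), ?_, ?_⟩
      · refine (Finset.card_insert_le _ _).trans ?_
        have h2 := Finset.card_image_le (s := Finset.univ) (f := fun i => (ω i).2.1)
        simp only [Finset.card_univ, Fintype.card_fin] at h2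
        omega
      · intro i v h
        rcases hf _ _ h with h | h
        · simp [h, hroot]
        · simp [h]

lemma walkForm_symm {p : V → ℝ} {K B : Matrix V V ℝ} (H : IsSignedWalk p K B) (d : ℕ) (u v : V) :
    walkForm p B d u v = walkForm p B d v u := rev_pow H.revB d u v

lemma isLocalPSDSum_of_row {p : V → ℝ} {K B : Matrix V V ℝ} (H : IsSignedWalk p K B) {R : ℕ}
    (hR : 2 ≤ R) (d : ℕ) (c : ℝ) (hc : ∀ u, ∑ v, |(B ^ d) u v| ≤ c) :
    IsLocalPSDSum R (c • walkForm p B 0 - walkForm p B d) ∧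
    IsLocalPSDSum R (c • walkForm p B 0 + walkForm p B d) := by
  have hrow : ∀ u, ∑ v, |walkForm p B d u v| ≤ c * p u := by
    intro u
    simp only [walkForm, Matrix.of_apply, abs_mul, abs_of_nonneg (H.p_nonneg u), ← Finset.mul_sum]
    rw [mul_comm c]
    exact mul_le_mul_of_nonneg_left (hc u) (H.p_nonneg u)
  have hd : c • walkForm p B 0 = Matrix.diagonal (fun u => c * p u) := by
    rw [walkForm_zero]
    ext u v
    simp [Matrix.diagonal_apply]
  rw [hd]
  refine ⟨isLocalPSDSum_diagonal_sub hR _ _ (walkForm_symm H d) hrow, ?_⟩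
  rw [← sub_neg_eq_add]
  refine isLocalPSDSum_diagonal_sub hR _ _ (fun u v => ?_) (by simpa using hrow)
  simp [walkForm_symm H d u v]

/-- `Π ± T_d` is local, since the signed walk is dominated by a Markov kernel. -/
lemma isLocalPSDSum_one {p : V → ℝ} {K B : Matrix V V ℝ} (H : IsSignedWalk p K B) {R : ℕ}
    (hR : 2 ≤ R) (d : ℕ) :
    IsLocalPSDSum R (walkForm p B 0 - walkForm p B d) ∧
    IsLocalPSDSum R (walkForm p B 0 + walkForm p B d) := by
  have := isLocalPSDSum_of_row H hR d 1 fun u =>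
    (Finset.sum_le_sum fun v _ => H.abs_pow_le d u v).trans (H.row_pow d u).le
  simpa using this

/-! ### The polynomial inequality -/

lemma IsLocalPSDSum.mono_diag {p : V → ℝ} {K B : Matrix V V ℝ} (H : IsSignedWalk p K B) {R : ℕ}
    (hR : 2 ≤ R) {M : Matrix V V ℝ} {c c' : ℝ} (h : IsLocalPSDSum R (M + c • walkForm p B 0))
    (hc : c ≤ c') : IsLocalPSDSum R (M + c' • walkForm p B 0) := by
  have h2 := h.add ((isLocalPSDSum_one H hR 0).2.smul (c := (c' - c) / 2) (by linarith))
  convert h2 using 1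
  module

/-- The first step of the chain: `2y ≤ 1 + y²` for `y = s t`, up to noise. -/
lemma isLocalPSDSum_first {p : V → ℝ} {K B : Matrix V V ℝ} (H : IsSignedWalk p K B) {R k : ℕ}
    (hk : 1 ≤ k) (hR : 2 ≤ R) (hkR : k + 1 ≤ R) (s ε : ℝ) (hε : ε ^ 2 = 1) :
    IsLocalPSDSum R (s ^ 2 • walkForm p B 2 - (2 * ε * s) • walkForm p B 1
      + (1 + 2 * (s ^ 2 / k)) • walkForm p B 0) := by
  have h1 := isLocalPSDSum_pair H hk 0 1 1 (-(ε * s)) (Or.inr ⟨rfl, hkR⟩)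
  have h2 := (isLocalPSDSum_one H hR 2).2.smul (c := s ^ 2 / k) (by positivity)
  convert h1.add h2 using 1
  simp only [mul_zero, mul_one, zero_add, neg_sq, mul_pow, hε, one_mul]
  module

/-- Second differences along the chain: `y^(2n+4) - 2 y^(2n+2) + y^(2n) = (y^(n+2) - y^n)²` is
nonnegative up to noise, where `y = s t`. -/
lemma isLocalPSDSum_second_diff {p : V → ℝ} {K B : Matrix V V ℝ} (H : IsSignedWalk p K B)
    {R k : ℕ} (hk : 1 ≤ k) (hR : 2 * k ≤ R) (s : ℝ) (n : ℕ) :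
    IsLocalPSDSum R (s ^ (2 * (n + 2)) • walkForm p B (2 * (n + 2))
      - (2 * s ^ (2 * (n + 1))) • walkForm p B (2 * (n + 1)) + s ^ (2 * n) • walkForm p B (2 * n)
      + (2 * (s ^ (2 * (n + 2)) / k + s ^ (2 * n) / k + 2 * (s ^ (2 * (n + 1)) / k)))
          • walkForm p B 0) := by
  have hR2 : 2 ≤ R := by omega
  have e : ∀ m : ℕ, 0 ≤ s ^ (2 * m) / (k : ℝ) := by
    intro m; rw [pow_mul]; positivity
  have h1 := isLocalPSDSum_pair H hk n 2 (s ^ n) (-(s ^ (n + 2))) (Or.inl hR)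
  have h2 := (isLocalPSDSum_one H hR2 (2 * (n + 2))).2.smul (e (n + 2))
  have h3 := (isLocalPSDSum_one H hR2 (2 * n)).2.smul (e n)
  have h4 := (isLocalPSDSum_one H hR2 2).2.smul (e (n + 1))
  have h5 := (isLocalPSDSum_one H hR2 (2 * (n + 1))).1.smul (e (n + 1))
  convert h1.add (h2.add (h3.add ((h4.add h4).add (h5.add h5)))) using 1
  rw [show 2 * n + 2 * 2 = 2 * (n + 2) by ring, show 2 * n + 2 = 2 * (n + 1) by ring]
  module

/-- Summed second differences, with the noise constants evaluated at the worst case `s² = 3`. -/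
lemma isLocalPSDSum_first_diff {p : V → ℝ} {K B : Matrix V V ℝ} (H : IsSignedWalk p K B)
    {R k l : ℕ} (hk : 1 ≤ k) (hR : 2 * k ≤ R) (s : ℝ)
    (hs : ∀ n ≤ l, s ^ (2 * n) / k ≤ 3 ^ n / 3 ^ l) (n : ℕ) (hn : n + 1 ≤ l) :
    IsLocalPSDSum R (s ^ (2 * (n + 1)) • walkForm p B (2 * (n + 1))
      - s ^ (2 * n) • walkForm p B (2 * n) - s ^ 2 • walkForm p B 2
      + (1 + 16 * ((3 : ℝ) ^ n - 1) / 3 ^ l) • walkForm p B 0) := by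
  induction n with
  | zero =>
    convert IsLocalPSDSum.zero (V := V) (R := R) using 1
    simp
  | succ n ih =>
    have h1 := IsLocalPSDSum.mono_diag H (by omega) (isLocalPSDSum_second_diff H hk hR s n)
      (c' := 32 * (3 ^ n / 3 ^ l)) (by
        have a1 := hs (n + 2) (by omega)
        have a2 := hs (n + 1) (by omega)
        have a3 := hs n (by omega)
        have b1 : (3 : ℝ) ^ (n + 2) / 3 ^ l = 9 * (3 ^ n / 3 ^ l) := by ring
        have b2 : (3 : ℝ) ^ (n + 1) / 3 ^ l = 3 * (3 ^ n / 3 ^ l) := by ring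
        linarith)
    convert h1.add (ih (by omega)) using 1
    rw [show n + 1 + 1 = n + 2 by ring]
    module

/-- The chain `y^(2n) ≥ n y² - (n - 1)`, up to noise. -/
lemma isLocalPSDSum_chain {p : V → ℝ} {K B : Matrix V V ℝ} (H : IsSignedWalk p K B)
    {R k l : ℕ} (hk : 1 ≤ k) (hR : 2 * k ≤ R) (s : ℝ)
    (hs : ∀ n ≤ l, s ^ (2 * n) / k ≤ 3 ^ n / 3 ^ l) (n : ℕ) (hn : n ≤ l) :
    IsLocalPSDSum R (s ^ (2 * n) • walkForm p B (2 * n) - ((n : ℝ) * s ^ 2) • walkForm p B 2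
      + ((n : ℝ) - 1 + (8 * 3 ^ n - 16 * n - 8) / 3 ^ l) • walkForm p B 0) := by
  induction n with
  | zero =>
    convert IsLocalPSDSum.zero (V := V) (R := R) using 1
    simp
  | succ n ih =>
    convert (isLocalPSDSum_first_diff H hk hR s hs n hn).add (ih (by omega)) using 1
    push_cast
    module

/-- The numerical heart: all noise terms fit into the constant `4`. -/
lemma noise_le (l : ℕ) (hl : 1 ≤ l) :
    1 + 2 * ((3 : ℝ) ^ 1 / 3 ^ l)
      + (l : ℝ)⁻¹ * ((l : ℝ) - 1 + (8 * 3 ^ l - 16 * l - 8) / 3 ^ l) ≤ 4 := by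
  have hl' : (0 : ℝ) < l := by exact_mod_cast hl
  have h3 : (0 : ℝ) < 3 ^ l := by positivity
  have key : (7 - 2 * (l : ℝ)) * 3 ^ l ≤ 10 * l + 8 := by
    rcases lt_or_ge l 4 with h | h
    · interval_cases l <;> norm_num
    · have : (4 : ℝ) ≤ l := by exact_mod_cast h
      nlinarith
  have e : 1 + 2 * ((3 : ℝ) ^ 1 / 3 ^ l)
      + (l : ℝ)⁻¹ * ((l : ℝ) - 1 + (8 * 3 ^ l - 16 * l - 8) / 3 ^ l) =
      4 + ((7 - 2 * (l : ℝ)) * 3 ^ l - (10 * l + 8)) / (l * 3 ^ l) := by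
    field_simp
    ring
  rw [e]
  have : ((7 - 2 * (l : ℝ)) * 3 ^ l - (10 * l + 8)) / (l * 3 ^ l) ≤ 0 :=
    div_nonpos_of_nonpos_of_nonneg (by linarith) (by positivity)
  linarith

/-- With `y = s t` and `s ^ (2l) = k`, the inequality `± 2 y ≤ 4 + y^(2l) / l` is local. -/
lemma isLocalPSDSum_poly {p : V → ℝ} {K B : Matrix V V ℝ} (H : IsSignedWalk p K B)
    {k l : ℕ} (hl : 1 ≤ l) (hk : 3 ^ l ≤ k) (s : ℝ) (hsk : s ^ (2 * l) = k)
    (ε : ℝ) (hε : ε ^ 2 = 1) :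
    IsLocalPSDSum (k * l + 1) (((k : ℝ) * (l : ℝ)⁻¹) • walkForm p B (2 * l)
      - (2 * ε * s) • walkForm p B 1 + (4 : ℝ) • walkForm p B 0) := by
  have hk3 : 3 ≤ k := (Nat.le_self_pow (by omega) 3).trans hk
  have hkl : k ≤ k * l := Nat.le_mul_of_pos_right k hl
  have hl' : (0 : ℝ) < l := by exact_mod_cast hl
  have hk0 : (0 : ℝ) < k := by exact_mod_cast (by omega : 0 < k)
  have hs3 : (3 : ℝ) ≤ s ^ 2 := by
    refine le_of_pow_le_pow_left₀ (n := l) (by omega) (by positivity) ?_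
    rw [← pow_mul, hsk]
    exact_mod_cast hk
  have hs : ∀ n ≤ l, s ^ (2 * n) / (k : ℝ) ≤ 3 ^ n / 3 ^ l := by
    intro n hn
    obtain ⟨m, rfl⟩ := Nat.exists_eq_add_of_le hn
    rw [← hsk, div_le_div_iff₀ (by rw [hsk]; exact hk0) (by positivity), pow_mul, pow_mul,
      pow_add, pow_add]
    have := pow_le_pow_left₀ (by norm_num : (0 : ℝ) ≤ 3) hs3 m
    have h2 : 0 ≤ (s ^ 2) ^ n * (3 : ℝ) ^ n := by positivity
    nlinarith
  have h1 := isLocalPSDSum_first H (by omega : 1 ≤ k) (by omega : 2 ≤ k * l + 1)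
    (by omega) s ε hε
  have h2 : IsLocalPSDSum (k * l + 1)
      ((l : ℝ)⁻¹ • (s ^ (2 * l) • walkForm p B (2 * l) - ((l : ℝ) * s ^ 2) • walkForm p B 2
      + ((l : ℝ) - 1 + (8 * 3 ^ l - 16 * l - 8) / 3 ^ l) • walkForm p B 0)) := by
    refine IsLocalPSDSum.smul ?_ (by positivity)
    rcases hl.eq_or_lt with rfl | hl2
    · convert IsLocalPSDSum.zero (V := V) using 1
      norm_num
    · refine isLocalPSDSum_chain H (by omega) ?_ s hs l le_rfl
      have := Nat.mul_le_mul_left k hl2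
      simp at this
      omega
  have h3 : IsLocalPSDSum (k * l + 1) (((k : ℝ) * (l : ℝ)⁻¹) • walkForm p B (2 * l)
      - (2 * ε * s) • walkForm p B 1 + (1 + 2 * (s ^ 2 / k)
      + (l : ℝ)⁻¹ * ((l : ℝ) - 1 + (8 * 3 ^ l - 16 * l - 8) / 3 ^ l)) • walkForm p B 0) := by
    convert h1.add h2 using 1
    rw [hsk, smul_add, smul_sub, smul_smul, smul_smul, smul_smul,
      inv_mul_cancel_left₀ hl'.ne']
    module
  refine h3.mono_diag H (by omega) (le_trans ?_ (noise_le l hl))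
  have := hs 1 hl
  simp only [mul_one] at this
  linarith

end Walk

/-! ### Weighted graphs -/

/-- Each row of `M` has `ℓ¹` norm at most `√|V| ‖M‖`: test `M` on the sign vector of the row. -/
lemma sum_abs_row_le {V : Type*} [Fintype V] [DecidableEq V] (M : Matrix V V ℝ) (u : V) :
    ∑ v, |M u v| ≤ Real.sqrt (Fintype.card V) * l2opNorm M := by
  let x : EuclideanSpace ℝ V := WithLp.toLp 2 fun v => (SignType.sign (M u v) : ℝ)
  have hx : ‖x‖ ≤ Real.sqrt (Fintype.card V) := by
    rw [EuclideanSpace.norm_eq]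
    refine Real.sqrt_le_sqrt ?_
    have : ∀ v, ‖x v‖ ^ 2 ≤ 1 := by
      intro v
      rcases lt_trichotomy (M u v) 0 with h | h | h <;> simp [x, h]
    calc ∑ v, ‖x v‖ ^ 2 ≤ ∑ _v : V, (1 : ℝ) := Finset.sum_le_sum fun v _ => this v
      _ = Fintype.card V := by simp
  have h1 : (Matrix.toEuclideanCLM (𝕜 := ℝ) M x) u = ∑ v, |M u v| := by
    simp [x, Matrix.mulVec, dotProduct, Matrix.toEuclideanCLM_toLp]
  have h2 := PiLp.norm_apply_le (Matrix.toEuclideanCLM (𝕜 := ℝ) M x) u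
  have h3 := (Matrix.toEuclideanCLM (𝕜 := ℝ) M).le_opNorm x
  have h4 := mul_le_mul_of_nonneg_left hx (norm_nonneg (Matrix.toEuclideanCLM (𝕜 := ℝ) M))
  rw [h1] at h2
  unfold l2opNorm
  linarith [le_abs_self (∑ v, |M u v|), Real.norm_eq_abs (∑ v, |M u v|)]

section Graph

variable {V : Type*} [Fintype V] {A : Matrix V V ℝ}

lemma gm_pos [Nonempty V] (hrow : ∀ u, 0 < ∑ v, A u v) : 0 < gm A :=
  Finset.sum_pos (fun u _ => hrow u) Finset.univ_nonempty

lemma gpi_pos [Nonempty V] (hrow : ∀ u, 0 < ∑ v, A u v) (u : V) : 0 < gpi A u :=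
  div_pos (hrow u) (gm_pos hrow)

lemma gpiStar_pos [Nonempty V] (hrow : ∀ u, 0 < ∑ v, A u v) : 0 < gpiStar A := by
  unfold gpiStar
  rw [Finset.lt_inf'_iff]
  exact fun u _ => gpi_pos hrow u

lemma card_mul_gpiStar_le [Nonempty V] (hrow : ∀ u, 0 < ∑ v, A u v) :
    (Fintype.card V : ℝ) * gpiStar A ≤ 1 := by
  have h1 : ∑ u, gpi A u = 1 := by
    simp only [gpi, ← Finset.sum_div]
    exact div_self (gm_pos hrow).ne'
  have h2 : ∑ _u : V, gpiStar A ≤ ∑ u, gpi A u :=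
    Finset.sum_le_sum fun u _ => Finset.inf'_le _ (Finset.mem_univ u)
  simpa [h1] using h2

lemma isSignedWalk_graph [Nonempty V] (hA : A.IsSymm) (hA0 : ∀ u v, 0 ≤ A u v)
    (hrow : ∀ u, 0 < ∑ v, A u v) {Ξ : Matrix V V ℝ} (hΞsym : Ξ.IsSymm)
    (hΞ : ∀ u v, Ξ u v = 1 ∨ Ξ u v = -1) :
    IsSignedWalk (gpi A) (gK A) (Matrix.hadamard Ξ (gK A)) := by
  have hd : ∀ u, 0 < gdeg A u := hrow
  have hrev : ∀ u v, gpi A u * gK A u v = gpi A v * gK A v u := by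
    intro u v
    have := (hd u).ne'
    have := (hd v).ne'
    simp only [gpi, gK, Matrix.of_apply, hA.apply u v]
    field_simp
  refine ⟨fun u => (gpi_pos hrow u).le, ?_, ?_, hrev, ?_⟩
  · intro u
    simp only [gK, Matrix.of_apply, ← Finset.sum_div]
    exact div_self (hd u).ne'
  · intro u v
    have h0 : 0 ≤ gK A u v := div_nonneg (hA0 u v) (hd u).le
    rcases hΞ u v with h | h <;> simp [h, abs_of_nonneg h0]
  · intro u v
    simp only [Matrix.hadamard_apply, hΞsym.apply u v]
    linear_combination Ξ u v * hrev u v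

end Graph

theorem sa_2xor_spectral {V : Type*} [Fintype V] [DecidableEq V] [Nonempty V]
    (A : Matrix V V ℝ) (hA : A.IsSymm) (hA0 : ∀ u v, 0 ≤ A u v)
    (hrow : ∀ u, 0 < ∑ v, A u v)
    (Ξ : Matrix V V ℝ) (hΞsym : Ξ.IsSymm) (hΞ : ∀ u v, Ξ u v = 1 ∨ Ξ u v = -1)
    (l k : ℕ) (hl : 1 ≤ l) (hk : 3 ^ l ≤ k)
    (ρ : ℝ) (hρ : 0 ≤ ρ)
    (hop : l2opNorm ((Matrix.hadamard Ξ (gK A)) ^ (2 * l)) ≤ ρ ^ (2 * l)) :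
    letI β : ℝ := ((k : ℝ) * (Real.sqrt (gpiStar A))⁻¹
        / (2 * (k : ℝ) ^ ((1 : ℝ) / (2 * (l : ℝ))))) * ρ ^ (2 * l)
      + 2 / (k : ℝ) ^ ((1 : ℝ) / (2 * (l : ℝ)))
    IsLocalPSDSum (k * l + 1)
      (β • Matrix.diagonal (gpi A) - (gm A)⁻¹ • Matrix.hadamard Ξ A) ∧
    IsLocalPSDSum (k * l + 1)
      (β • Matrix.diagonal (gpi A) + (gm A)⁻¹ • Matrix.hadamard Ξ A) := by
  have H := isSignedWalk_graph hA hA0 hrow hΞsym hΞ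
  have hk3 : 3 ≤ k := (Nat.le_self_pow (by omega) 3).trans hk
  have hkl : k ≤ k * l := Nat.le_mul_of_pos_right k hl
  have hl' : (1 : ℝ) ≤ l := by exact_mod_cast hl
  have hk0 : (0 : ℝ) < k := by exact_mod_cast (by omega : 0 < k)
  set s : ℝ := (k : ℝ) ^ ((1 : ℝ) / (2 * (l : ℝ))) with hs_def
  have hs : 0 < s := Real.rpow_pos_of_pos hk0 _
  have hsk : s ^ (2 * l) = k := by
    rw [hs_def, ← Real.rpow_natCast, ← Real.rpow_mul hk0.le]
    push_cast
    rw [one_div_mul_cancel (by positivity), Real.rpow_one]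
  set B := Matrix.hadamard Ξ (gK A) with hB
  set b : ℝ := (Real.sqrt (gpiStar A))⁻¹ * ρ ^ (2 * l) with hb
  have hb0 : 0 ≤ b := by positivity
  -- `|V| π_* ≤ 1` converts the dimension factor `√|V|` into `π_*^{-1/2}`
  have hrowb : ∀ u, ∑ v, |(B ^ (2 * l)) u v| ≤ b := by
    intro u
    refine (sum_abs_row_le _ u).trans (mul_le_mul ?_ hop (norm_nonneg _) (by positivity))
    rw [← Real.sqrt_inv]
    refine Real.sqrt_le_sqrt ?_
    rw [le_inv_comm₀ (by exact_mod_cast Fintype.card_pos) (gpiStar_pos hrow),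
      ← one_div, le_div_iff₀ (by exact_mod_cast Fintype.card_pos), mul_comm]
    exact card_mul_gpiStar_le hrow
  have hlong := (isLocalPSDSum_of_row H (by omega : 2 ≤ k * l + 1) (2 * l) b hrowb).1
  have hT1 : (gm A)⁻¹ • Matrix.hadamard Ξ A = walkForm (gpi A) B 1 := by
    ext u v
    have hd : gdeg A u ≠ 0 := (hrow u).ne'
    have hm := (gm_pos hrow).ne'
    simp [walkForm, hB, gpi, gK]
    field_simp
  have hfin : ∀ ε : ℝ, ε ^ 2 = 1 → IsLocalPSDSum (k * l + 1)
      (-(ε • walkForm (gpi A) B 1) + ((k : ℝ) * (Real.sqrt (gpiStar A))⁻¹ / (2 * s) * ρ ^ (2 * l)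
        + 2 / s) • walkForm (gpi A) B 0) := by
    intro ε hε
    have h1 := ((isLocalPSDSum_poly H hl hk s hsk ε hε).add
      (hlong.smul (c := (k : ℝ) * (l : ℝ)⁻¹) (by positivity))).smul
      (c := (2 * s)⁻¹) (by positivity)
    have h2 : IsLocalPSDSum (k * l + 1) (-(ε • walkForm (gpi A) B 1)
        + ((2 * s)⁻¹ * (4 + (k : ℝ) * (l : ℝ)⁻¹ * b)) • walkForm (gpi A) B 0) := by
      convert h1 using 1
      have : ε • walkForm (gpi A) B 1 = ((2 * s)⁻¹ * (2 * ε * s)) • walkForm (gpi A) B 1 := by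
        congr 1
        field_simp
      rw [this]
      module
    refine h2.mono_diag H (by omega) ?_
    have h3 : (k : ℝ) * (l : ℝ)⁻¹ * b ≤ k * b :=
      mul_le_mul_of_nonneg_right (mul_le_of_le_one_right hk0.le (inv_le_one_of_one_le₀ hl')) hb0
    calc (2 * s)⁻¹ * (4 + (k : ℝ) * (l : ℝ)⁻¹ * b) ≤ (2 * s)⁻¹ * (4 + k * b) := by gcongr
      _ = _ := by rw [hb]; field_simp; ring
  rw [hT1, ← walkForm_zero (gpi A) B]
  refine ⟨?_, ?_⟩
  · convert hfin 1 (by norm_num) using 1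
    module
  · convert hfin (-1) (by norm_num) using 1
    module
end
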